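/- arXiv:2209.15394 — 3 statements merged into one kernel-verified Lean document; each statement's English description precedes it below -/
import Mathlib

section
/- Let S = S^n be the unit n-dimensional sphere in ℝ^{n+1} with the metric inherited from the Euclidean norm, and suppose S = f_1(S) ∪ ... ∪ f_k(S) where each f_i : S → S is a weak contraction. Then k ≥ n + 2. -/
/-- In finite dimension the convex hull of a compact set is compact. -/
theorem IsCompact.convexHull_of_finiteDimensional {E : Type*} [NormedAddCommGroup E]
    [NormedSpace ℝ E] [FiniteDimensional ℝ E] {s : Set E} (hs : IsCompact s) :
    IsCompact (convexHull ℝ s) := by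
  have hunion : convexHull ℝ s = ⋃ m : Fin (Module.finrank ℝ E + 2),
      Set.image (fun p : (Fin m → ℝ) × (Fin m → E) => ∑ i, p.1 i • p.2 i)
        (stdSimplex ℝ (Fin m) ×ˢ Set.univ.pi fun _ => s) := by
    ext x
    simp only [Set.mem_iUnion, Set.mem_image, Set.mem_prod, Set.mem_univ_pi, Prod.exists]
    constructor
    · intro hx
      obtain ⟨ι, _, z, w, hz, hind, hw, hw1, hsum⟩ := eq_pos_convex_span_of_mem_convexHull hx
      have hcard : Fintype.card ι ≤ Module.finrank ℝ E + 1 := hind.card_le_finrank_succ.trans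
        (Nat.succ_le_succ (Submodule.finrank_le _))
      let e := (Fintype.equivFin ι).symm
      refine ⟨⟨Fintype.card ι, Nat.lt_succ_of_le hcard⟩, w ∘ e, z ∘ e,
        ⟨⟨fun i => (hw _).le, ?_⟩, fun i => hz (Set.mem_range_self _)⟩, ?_⟩
      · exact (e.sum_comp w).trans hw1
      · exact (e.sum_comp fun i => w i • z i).trans hsum
    · rintro ⟨m, w, z, ⟨hw, hz⟩, rfl⟩
      exact (convex_convexHull ℝ s).sum_mem (fun i _ => hw.1 i) hw.2
        fun i _ => subset_convexHull ℝ s (hz i)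
  rw [hunion]
  exact isCompact_iUnion fun m =>
    ((isCompact_stdSimplex ℝ _).prod (isCompact_univ_pi fun _ => hs)).image (by fun_prop)

open Metric in
/-- A weak contraction of the unit sphere strictly increases inner products, so the convex hull of
its image avoids the origin. -/
theorem zero_notMem_convexHull_range_of_weak_contraction {E : Type*} [NormedAddCommGroup E]
    [InnerProductSpace ℝ E] (f : sphere (0 : E) 1 → sphere (0 : E) 1)
    (hf : ∀ x y, x ≠ y → dist (f x) (f y) < dist x y) :
    (0 : E) ∉ convexHull ℝ (Set.range fun x => (f x : E)) := by
  have inner_lt : ∀ x y : sphere (0 : E) 1, x ≠ y →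
      inner ℝ (x : E) (y : E) < inner ℝ (f x : E) (f y : E) := by
    intro x y hxy
    have h := hf x y hxy
    rw [Subtype.dist_eq, Subtype.dist_eq, dist_eq_norm, dist_eq_norm] at h
    have hsq := pow_lt_pow_left₀ h (norm_nonneg _) two_ne_zero
    rw [norm_sub_sq_real, norm_sub_sq_real] at hsq
    simp only [norm_eq_of_mem_sphere] at hsq
    linarith
  have inner_le : ∀ x y : sphere (0 : E) 1,
      inner ℝ (x : E) (y : E) ≤ inner ℝ (f x : E) (f y : E) := by
    intro x y
    rcases eq_or_ne x y with rfl | hxy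
    · simp [norm_eq_of_mem_sphere]
    · exact (inner_lt x y hxy).le
  intro h0
  obtain ⟨ι, _, w, z, hw, hw1, hz, hsum⟩ := mem_convexHull_iff_exists_fintype.1 h0
  choose x hx using hz
  simp only [← hx] at hsum
  have expand : ∀ v : ι → E, inner ℝ (∑ i, w i • v i) (∑ j, w j • v j) =
      ∑ i, ∑ j, w i * w j * inner ℝ (v i) (v j) := by
    intro v
    simp only [sum_inner, inner_sum, real_inner_smul_left, real_inner_smul_right, mul_assoc]
    simp only [real_inner_comm]
  have hnonneg : ∀ i j, 0 ≤ w i * w j *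
      (inner ℝ (f (x i) : E) (f (x j) : E) - inner ℝ (x i : E) (x j : E)) := fun i j =>
    mul_nonneg (mul_nonneg (hw i) (hw j)) (sub_nonneg.2 (inner_le _ _))
  have htotal : ∑ i, ∑ j, w i * w j *
      (inner ℝ (f (x i) : E) (f (x j) : E) - inner ℝ (x i : E) (x j : E)) = 0 := by
    refine le_antisymm ?_ (Finset.sum_nonneg fun i _ => Finset.sum_nonneg fun j _ => hnonneg i j)
    have hF := expand fun i => (f (x i) : E)
    have hX := expand fun i => (x i : E)
    have hpos := real_inner_self_nonneg (x := ∑ i, w i • (x i : E))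
    rw [hsum, inner_zero_left] at hF
    simp only [mul_sub, Finset.sum_sub_distrib]
    linarith
  have hzero : ∀ i j, w i * w j *
      (inner ℝ (f (x i) : E) (f (x j) : E) - inner ℝ (x i : E) (x j : E)) = 0 := by
    intro i j
    have hi := (Finset.sum_eq_zero_iff_of_nonneg fun i _ =>
      Finset.sum_nonneg fun j _ => hnonneg i j).1 htotal i (Finset.mem_univ i)
    exact (Finset.sum_eq_zero_iff_of_nonneg fun j _ => hnonneg i j).1 hi j (Finset.mem_univ j)
  obtain ⟨j, hj⟩ : ∃ j, w j ≠ 0 := by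
    by_contra! h
    simp [h] at hw1
  have hterm : ∀ i, w i * inner ℝ (f (x i) : E) (f (x j) : E) = w i := by
    intro i
    rcases eq_or_ne (w i) 0 with hi | hi
    · simp [hi]
    · have hxij : x i = x j := by
        by_contra hne
        have := (mul_eq_zero.1 (hzero i j)).resolve_left (mul_ne_zero hi hj)
        linarith [inner_lt _ _ hne]
      simp [hxij, norm_eq_of_mem_sphere]
  have hone : inner ℝ (∑ i, w i • (f (x i) : E)) (f (x j) : E) = (1 : ℝ) := by
    simp only [sum_inner, real_inner_smul_left, hterm, hw1]
  rw [hsum, inner_zero_left] at hone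
  exact zero_ne_one hone

open Metric in
/-- The image of a weak contraction of the unit sphere lies in an open hemisphere. -/
theorem exists_forall_pos_of_weak_contraction {E : Type*} [NormedAddCommGroup E]
    [InnerProductSpace ℝ E] [FiniteDimensional ℝ E] (f : sphere (0 : E) 1 → sphere (0 : E) 1)
    (hf : ∀ x y, x ≠ y → dist (f x) (f y) < dist x y) :
    ∃ φ : E →L[ℝ] ℝ, ∀ x, 0 < φ (f x) := by
  have hlip : LipschitzWith 1 f := LipschitzWith.of_dist_le_mul fun x y => by
    rcases eq_or_ne x y with rfl | hxy
    · simp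
    · simpa using (hf x y hxy).le
  have : ProperSpace E := FiniteDimensional.proper ℝ E
  have hcompact : IsCompact (Set.range fun x => (f x : E)) :=
    isCompact_range (continuous_subtype_val.comp hlip.continuous)
  obtain ⟨φ, u, hu, hφ⟩ := geometric_hahn_banach_point_closed (convex_convexHull ℝ _)
    hcompact.convexHull_of_finiteDimensional.isClosed (zero_notMem_convexHull_range_of_weak_contraction f hf)
  rw [map_zero] at hu
  exact ⟨φ, fun x => hu.trans (hφ _ (subset_convexHull ℝ _ (Set.mem_range_self x)))⟩

/-- At most `dim E` linear functionals are simultaneously nonpositive at some nonzero vector. -/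
theorem exists_ne_zero_forall_apply_nonpos {E : Type*} [AddCommGroup E] [Module ℝ E]
    [FiniteDimensional ℝ E] [Nontrivial E] {ι : Type*} [Fintype ι] (φ : ι → E →ₗ[ℝ] ℝ)
    (hcard : Fintype.card ι ≤ Module.finrank ℝ E) : ∃ y ≠ 0, ∀ i, φ i y ≤ 0 := by
  by_cases hinj : Function.Injective (LinearMap.pi φ)
  · have hle := LinearMap.finrank_le_finrank_of_injective hinj
    rw [Module.finrank_fintype_fun_eq_card] at hle
    have heq : Module.finrank ℝ E = Module.finrank ℝ (ι → ℝ) := by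
      rw [Module.finrank_fintype_fun_eq_card]
      exact le_antisymm hle hcard
    obtain ⟨y, hy⟩ := (LinearMap.injective_iff_surjective_of_finrank_eq_finrank heq).1 hinj
      fun _ => -1
    have hφ : ∀ i, φ i y = -1 := fun i => congrFun hy i
    have : Nonempty ι := Fintype.card_pos_iff.1 (Module.finrank_pos.trans_le hle)
    refine ⟨y, ?_, fun i => by rw [hφ i]; norm_num⟩
    rintro rfl
    simpa using hφ (Classical.arbitrary ι)
  · rw [injective_iff_map_eq_zero] at hinj
    push Not at hinj
    obtain ⟨y, hy, hne⟩ := hinj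
    exact ⟨y, hne, fun i => (congrFun hy i).le⟩

/-- If the unit `n`-sphere is covered by the images of `k` weak contractions of itself,
then `k ≥ n + 2`. -/
theorem sphere_weak_contraction_cover_card {n k : ℕ}
    (f : Fin k → (Metric.sphere (0 : EuclideanSpace ℝ (Fin (n + 1))) 1) →
      (Metric.sphere (0 : EuclideanSpace ℝ (Fin (n + 1))) 1))
    (hweak : ∀ i x y, x ≠ y → dist (f i x) (f i y) < dist x y)
    (hcover : (⋃ i, Set.range (f i)) = Set.univ) :
    n + 2 ≤ k := by
  by_contra! hk
  choose φ hφ using fun i => exists_forall_pos_of_weak_contraction (f i) (hweak i)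
  obtain ⟨y, hy, hle⟩ := exists_ne_zero_forall_apply_nonpos (fun i => (φ i).toLinearMap)
    (by simpa using Nat.le_of_lt_succ hk)
  have hmem : ‖y‖⁻¹ • y ∈ Metric.sphere (0 : EuclideanSpace ℝ (Fin (n + 1))) 1 := by
    simp [norm_smul, hy]
  obtain ⟨i, x, hx⟩ := Set.mem_iUnion.1 (hcover ▸ Set.mem_univ (⟨_, hmem⟩ : Metric.sphere _ _))
  have hpos := hφ i x
  rw [hx, map_smul, smul_eq_mul] at hpos
  exact hpos.not_ge (mul_nonpos_of_nonneg_of_nonpos (by positivity) (hle i))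
end

section
/- For n ≥ 1, define self-maps f and g of the cube [0,1]^n by f(x_1, ..., x_n) = (x_2/2, x_3, ..., x_n, x_1) and g(x_1, ..., x_n) = (1/2 + x_2/2, x_3, ..., x_n, x_1). Then f and g are continuous, f([0,1]^n) ∪ g([0,1]^n) = [0,1]^n, and the family {f, g} is topologically contractive; hence [0,1]^n is a topological fractal with witnessing number two. -/
/-- A family `F` of self-maps of a metric space `X` is topologically contractive if for
every `ε > 0` there is `k` such that every composition of `k` maps from `F` has image of
diameter less than `ε`. -/
def TopContractive {X : Type*} [MetricSpace X] (F : Set (X → X)) : Prop :=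
  ∀ ε > (0 : ℝ), ∃ k : ℕ, ∀ l : List (X → X), (∀ f ∈ l, f ∈ F) → l.length = k →
    Metric.diam (Set.range (l.foldr (· ∘ ·) id)) < ε

/-- The map `f(x₁, …, xₙ) = (x₂/2, x₃, …, xₙ, x₁)` of the cube `[0,1]ⁿ`
(for `n = 1` it reads `f(x₁) = x₁/2`, thanks to cyclic indexing). -/
noncomputable def cubeF {n : ℕ} [NeZero n] (x : Fin n → Set.Icc (0 : ℝ) 1) :
    Fin n → Set.Icc (0 : ℝ) 1 :=
  fun i =>
    if i.val = 0 then
      ⟨(x (i + 1) : ℝ) / 2,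
        ⟨by linarith [(x (i + 1)).2.1], by linarith [(x (i + 1)).2.2]⟩⟩
    else x (i + 1)

/-- The map `g(x₁, …, xₙ) = (1/2 + x₂/2, x₃, …, xₙ, x₁)` of the cube `[0,1]ⁿ`
(for `n = 1` it reads `g(x₁) = 1/2 + x₁/2`, thanks to cyclic indexing). -/
noncomputable def cubeG {n : ℕ} [NeZero n] (x : Fin n → Set.Icc (0 : ℝ) 1) :
    Fin n → Set.Icc (0 : ℝ) 1 :=
  fun i =>
    if i.val = 0 then
      ⟨1 / 2 + (x (i + 1) : ℝ) / 2,
        ⟨by linarith [(x (i + 1)).2.1], by linarith [(x (i + 1)).2.2]⟩⟩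
    else x (i + 1)

/-- A self-map of the cube shifts coordinates cyclically and halves distances in the first one. -/
def HalvesFirstShift {n : ℕ} [NeZero n]
    (h : (Fin n → Set.Icc (0 : ℝ) 1) → Fin n → Set.Icc (0 : ℝ) 1) : Prop :=
  ∀ x y i, dist (h x i) (h y i) = (if i.val = 0 then 1 / 2 else 1) * dist (x (i + 1)) (y (i + 1))

theorem halvesFirstShift_cubeF {n : ℕ} [NeZero n] : HalvesFirstShift (cubeF (n := n)) := by
  intro x y i
  by_cases hi : i.val = 0
  · simp only [cubeF, hi, if_true, Subtype.dist_eq, Real.dist_eq]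
    rw [← sub_div, abs_div, abs_two]
    ring
  · simp [cubeF, hi]

theorem halvesFirstShift_cubeG {n : ℕ} [NeZero n] : HalvesFirstShift (cubeG (n := n)) := by
  intro x y i
  by_cases hi : i.val = 0
  · simp only [cubeG, hi, if_true, Subtype.dist_eq, Real.dist_eq]
    rw [add_sub_add_left_eq_sub, ← sub_div, abs_div, abs_two]
    ring
  · simp [cubeG, hi]

theorem HalvesFirstShift.lipschitzWith {n : ℕ} [NeZero n]
    {h : (Fin n → Set.Icc (0 : ℝ) 1) → Fin n → Set.Icc (0 : ℝ) 1} (hh : HalvesFirstShift h) :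
    LipschitzWith 1 h := by
  refine LipschitzWith.mk_one fun x y => (dist_pi_le_iff dist_nonneg).2 fun i => ?_
  rw [hh x y i]
  refine (mul_le_of_le_one_left dist_nonneg ?_).trans (dist_le_pi_dist x y (i + 1))
  split_ifs <;> norm_num

theorem range_cubeF_union_range_cubeG {n : ℕ} [NeZero n] :
    Set.range (cubeF (n := n)) ∪ Set.range (cubeG (n := n)) = Set.univ := by
  refine Set.eq_univ_of_forall fun y => ?_
  have hval (i : Fin n) (hi : i.val = 0) : i = 0 := Fin.ext (by simpa using hi)
  rcases le_total ((y 0 : ℝ)) (1 / 2) with h | h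
  · refine Or.inl ⟨fun i => if i = 1 then ⟨2 * (y 0 : ℝ), by linarith [(y 0).2.1], by linarith⟩
      else y (i - 1), funext fun i => ?_⟩
    by_cases hi : i.val = 0
    · obtain rfl := hval i hi
      ext
      simp [cubeF]
    · have : i ≠ 0 := fun h0 => hi (by simp [h0])
      simp [cubeF, this]
  · refine Or.inr ⟨fun i => if i = 1 then
      ⟨2 * (y 0 : ℝ) - 1, by linarith, by linarith [(y 0).2.2]⟩ else y (i - 1), funext fun i => ?_⟩
    by_cases hi : i.val = 0
    · obtain rfl := hval i hi
      ext
      simp only [cubeG, Fin.val_zero, zero_add, if_true]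
      ring
    · have : i ≠ 0 := fun h0 => hi (by simp [h0])
      simp [cubeG, this]

/-- Each coordinate is halved once in every `n` steps; coordinate `0` counts as position `n`. -/
theorem dist_foldr_comp_le {n : ℕ} [NeZero n]
    (l : List ((Fin n → Set.Icc (0 : ℝ) 1) → Fin n → Set.Icc (0 : ℝ) 1))
    (hl : ∀ h ∈ l, HalvesFirstShift h) (m : ℕ) (i : Fin n)
    (hm : m * n + 1 ≤ (if i.val = 0 then n else i.val) + l.length)
    (x y : Fin n → Set.Icc (0 : ℝ) 1) :
    dist (l.foldr (· ∘ ·) id x i) (l.foldr (· ∘ ·) id y i) ≤ (1 / 2 : ℝ) ^ m := by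
  have hn := NeZero.pos n
  induction l generalizing m i with
  | nil =>
    have hm0 : m = 0 := by
      by_contra h0
      have : n ≤ m * n := Nat.le_mul_of_pos_left n (Nat.pos_of_ne_zero h0)
      have := i.isLt
      simp only [List.length_nil] at hm
      split_ifs at hm <;> omega
    subst hm0
    simpa [Subtype.dist_eq] using Real.dist_le_of_mem_Icc_01 (x i).2 (y i).2
  | cons h l ih =>
    have hl' : ∀ h ∈ l, HalvesFirstShift h := fun h hh => hl h (List.mem_cons_of_mem _ hh)
    have hsucc : (if (i + 1).val = 0 then n else (i + 1).val) = i.val + 1 := by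
      have hv : (i + 1).val = (i.val + 1) % n := by simp [Fin.val_add]
      rcases (Nat.succ_le_of_lt i.isLt).lt_or_eq with hlt | heq
      · rw [hv, Nat.mod_eq_of_lt hlt, if_neg (by omega)]
      · rw [Nat.succ_eq_add_one] at heq
        rw [hv, heq, Nat.mod_self, if_pos rfl]
    simp only [List.foldr_cons, Function.comp_apply]
    rw [hl h List.mem_cons_self]
    rw [List.length_cons] at hm
    by_cases hi : i.val = 0
    · rw [if_pos hi] at hm ⊢
      rcases m with _ | m
      · have := ih hl' 0 (i + 1) (by rw [hsucc]; omega)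
        rw [pow_zero] at *
        linarith
      · have := ih hl' m (i + 1) (by rw [hsucc]; rw [add_mul] at hm; omega)
        rw [pow_succ]
        linarith
    · rw [if_neg hi] at hm ⊢
      rw [one_mul]
      exact ih hl' m (i + 1) (by rw [hsucc]; omega)

theorem topContractive_of_halvesFirstShift {n : ℕ} [NeZero n]
    {F : Set ((Fin n → Set.Icc (0 : ℝ) 1) → Fin n → Set.Icc (0 : ℝ) 1)}
    (hF : ∀ h ∈ F, HalvesFirstShift h) : TopContractive F := by
  intro ε hε
  obtain ⟨m, hm⟩ := exists_pow_lt_of_lt_one hε (by norm_num : (1 / 2 : ℝ) < 1)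
  refine ⟨m * n + 1, fun l hl hk => lt_of_le_of_lt ?_ hm⟩
  refine Metric.diam_le_of_forall_dist_le (by positivity) ?_
  rintro _ ⟨x, rfl⟩ _ ⟨y, rfl⟩
  refine (dist_pi_le_iff (by positivity)).2 fun i => ?_
  exact dist_foldr_comp_le l (fun h hh => hF h (hl h hh)) m i (by omega) x y

/-- The maps `f` and `g` above are continuous, their images cover `[0,1]ⁿ` and
`{f, g}` is topologically contractive; hence `[0,1]ⁿ` is a topological fractal with
witnessing number two. -/
theorem cube_is_topological_fractal_with_two_maps {n : ℕ} [NeZero n] :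
    Continuous (cubeF (n := n)) ∧ Continuous (cubeG (n := n)) ∧
    Set.range (cubeF (n := n)) ∪ Set.range (cubeG (n := n)) = Set.univ ∧
    TopContractive {cubeF (n := n), cubeG (n := n)} := by
  refine ⟨halvesFirstShift_cubeF.lipschitzWith.continuous,
    halvesFirstShift_cubeG.lipschitzWith.continuous, range_cubeF_union_range_cubeG,
    topContractive_of_halvesFirstShift ?_⟩
  rintro h (rfl | rfl)
  exacts [halvesFirstShift_cubeF, halvesFirstShift_cubeG]
end

section
/- Every planar absolute retract is a topological fractal: if X ⊆ ℝ² is a nonempty compact set that is an absolute retract (equivalently, a retract of the Hilbert cube), then X is a topological fractal. -/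
open Set Metric Filter Topology
open scoped NNReal unitInterval

/-- A metric space covered by the images of a topologically contractive finite family of
continuous self-maps. -/
def IsTopologicalFractal (X : Type*) [MetricSpace X] : Prop :=
  ∃ F : Set (X → X), F.Finite ∧ (∀ f ∈ F, Continuous f) ∧
    TopContractive F ∧ (⋃ f ∈ F, Set.range f) = Set.univ

/-- For every `n > 0` the space is covered by the images of finitely many `1 / n`-Lipschitz
self-maps. -/
def HasFineContractions (K : Type*) [MetricSpace K] : Prop :=
  ∀ n : ℕ, 0 < n → ∃ S : Set (K → K), S.Finite ∧ (∀ s ∈ S, LipschitzWith (n : ℝ≥0)⁻¹ s) ∧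
    ∀ x, ∃ s ∈ S, x ∈ range s

theorem hasFineContractions_unitInterval : HasFineContractions I := by
  intro n hn
  have hn' : (0 : ℝ) < n := by exact_mod_cast hn
  have hmem : ∀ (i : Fin n) (x : I), ((i : ℝ) + x) / n ∈ Icc (0 : ℝ) 1 := by
    intro i x
    have h1 : ((i : ℕ) : ℝ) + 1 ≤ n := by exact_mod_cast i.2
    have h2 := x.2.1
    have h3 := x.2.2
    constructor
    · positivity
    · rw [div_le_one hn']; linarith
  refine ⟨range fun (i : Fin n) (x : I) => (⟨((i : ℝ) + x) / n, hmem i x⟩ : I),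
    finite_range _, ?_, ?_⟩
  · rintro _ ⟨i, rfl⟩
    refine LipschitzWith.of_dist_le_mul fun x y => ?_
    rw [Subtype.dist_eq, Subtype.dist_eq, Real.dist_eq, Real.dist_eq]
    push_cast
    rw [← sub_div, add_sub_add_left_eq_sub, abs_div, abs_of_pos hn', div_eq_inv_mul]
  · intro x
    have hx0 := x.2.1
    have hx1 := x.2.2
    rcases hx1.lt_or_eq with hx | hx
    · have hfl : ⌊(n : ℝ) * x⌋₊ < n := by
        rw [Nat.floor_lt (by positivity)]
        nlinarith
      have h1 := Nat.floor_le (a := (n : ℝ) * x) (by positivity)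
      have h2 := Nat.lt_floor_add_one ((n : ℝ) * x)
      refine ⟨_, ⟨⟨_, hfl⟩, rfl⟩, ⟨n * x - ⌊(n : ℝ) * x⌋₊, by linarith, by linarith⟩, ?_⟩
      ext
      simp
      field_simp
    · refine ⟨_, ⟨⟨n - 1, by omega⟩, rfl⟩, 1, ?_⟩
      ext
      simp [Nat.cast_sub (show 1 ≤ n from hn), hx, hn'.ne']

theorem HasFineContractions.prod {K L : Type*} [MetricSpace K] [MetricSpace L]
    (hK : HasFineContractions K) (hL : HasFineContractions L) : HasFineContractions (K × L) := by
  intro n hn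
  obtain ⟨S, hS, hSL, hSc⟩ := hK n hn
  obtain ⟨T, hT, hTL, hTc⟩ := hL n hn
  refine ⟨image2 Prod.map S T, hS.image2 _ hT, ?_, ?_⟩
  · rintro _ ⟨s, hs, t, ht, rfl⟩
    simpa using! ((hSL s hs).comp LipschitzWith.prod_fst).prodMk
      ((hTL t ht).comp LipschitzWith.prod_snd)
  · rintro ⟨x, y⟩
    obtain ⟨s, hs, a, rfl⟩ := hSc x
    obtain ⟨t, ht, b, rfl⟩ := hTc y
    exact ⟨_, ⟨s, hs, t, ht, rfl⟩, (a, b), rfl⟩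

theorem IsTopologicalFractal.of_lipschitzWith_comp {X K : Type*} [MetricSpace X]
    [MetricSpace K] [CompactSpace K] (hK : HasFineContractions K)
    {ρ : X → K} (hρ : Continuous ρ) (hρs : Function.Surjective ρ)
    {Γ : Set (K → X)} (hΓ : Γ.Finite) (hΓc : ∀ γ ∈ Γ, Continuous γ)
    (hcov : ∀ x, ∃ γ ∈ Γ, x ∈ range γ) {L : ℝ≥0} (hL : ∀ γ ∈ Γ, LipschitzWith L (ρ ∘ γ)) :
    IsTopologicalFractal X := by
  obtain ⟨n, hn⟩ := exists_nat_gt (2 * L + 2)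
  have hnpos : 0 < n := by
    rcases Nat.eq_zero_or_pos n with rfl | h
    · simp at hn
    · exact h
  have hn0 : (n : ℝ≥0) ≠ 0 := by exact_mod_cast hnpos.ne'
  have hLn : L * (n : ℝ≥0)⁻¹ ≤ 2⁻¹ := by
    rw [← div_eq_mul_inv, div_le_iff₀ (pos_iff_ne_zero.2 hn0), le_inv_mul_iff₀ (by norm_num)]
    exact le_trans le_self_add hn.le
  have hn1 : (n : ℝ≥0)⁻¹ ≤ 1 := inv_le_one_of_one_le₀ (by exact_mod_cast hnpos)
  obtain ⟨S, hS, hSL, hSc⟩ := hK n hnpos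
  refine ⟨image2 (fun γ s => γ ∘ s ∘ ρ) Γ S, hΓ.image2 _ hS, ?_, ?_, ?_⟩
  · rintro _ ⟨γ, hγ, s, hs, rfl⟩
    exact (hΓc γ hγ).comp ((hSL s hs).continuous.comp hρ)
  · have key : ∀ l : List (X → X), (∀ f ∈ l, f ∈ image2 (fun γ s => γ ∘ s ∘ ρ) Γ S) →
        ∃ G : K → K, LipschitzWith (2⁻¹ ^ l.length) G ∧ ρ ∘ l.foldr (· ∘ ·) id = G ∘ ρ := by
      intro l
      induction l with
      | nil => exact fun _ => ⟨id, by simpa using LipschitzWith.id, rfl⟩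
      | cons f l ih =>
        intro h
        obtain ⟨G, hG, hGe⟩ := ih fun f hf => h f (List.mem_cons_of_mem _ hf)
        obtain ⟨γ, hγ, s, hs, rfl⟩ := h f List.mem_cons_self
        refine ⟨(ρ ∘ γ) ∘ s ∘ G, ?_, ?_⟩
        · refine (((hL γ hγ).comp (hSL s hs)).comp hG).weaken ?_
          rw [List.length_cons, pow_succ']
          gcongr
        · rw [List.foldr_cons]
          funext x
          have := congrFun hGe x
          simp only [Function.comp_apply] at this ⊢
          rw [this]
    intro ε hε
    have hδ : ∃ δ > 0, ∀ γ ∈ Γ, ∀ a b, dist a b < δ → dist (γ a) (γ b) < ε / 2 := by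
      have hev : ∀ γ ∈ Γ, ∀ᶠ δ in 𝓝[>] (0 : ℝ),
          ∀ a b, dist a b < δ → dist (γ a) (γ b) < ε / 2 := by
        intro γ hγ
        obtain ⟨δ, hδ, h⟩ := Metric.uniformContinuous_iff.1
          (CompactSpace.uniformContinuous_of_continuous (hΓc γ hγ)) (ε / 2) (by positivity)
        filter_upwards [Ioo_mem_nhdsGT hδ] with δ' hδ' a b hab
        exact h (hab.trans hδ'.2)
      obtain ⟨δ, h, hpos⟩ := (((eventually_all_finite hΓ).2 hev).and self_mem_nhdsWithin).exists
      exact ⟨δ, hpos, h⟩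
    obtain ⟨δ, hδ, hΓδ⟩ := hδ
    have hlim : Tendsto (fun k : ℕ => (2⁻¹ : ℝ) ^ k * diam (univ : Set K)) atTop (𝓝 0) := by
      simpa using (tendsto_pow_atTop_nhds_zero_of_lt_one (r := (2⁻¹ : ℝ)) (by norm_num)
        (by norm_num)).mul_const (diam (univ : Set K))
    obtain ⟨k, hk⟩ := (hlim.eventually (gt_mem_nhds hδ)).exists
    refine ⟨k + 1, fun l hl hlen => ?_⟩
    obtain _ | ⟨f, l⟩ := l
    · simp at hlen
    obtain ⟨γ, hγ, s, hs, rfl⟩ := hl f List.mem_cons_self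
    obtain ⟨G, hG, hGe⟩ := key l fun f hf => hl f (List.mem_cons_of_mem _ hf)
    have hlk : l.length = k := by simpa using hlen
    rw [hlk] at hG
    refine (diam_le_of_forall_dist_le (C := ε / 2) (by positivity) ?_).trans_lt (by linarith)
    rintro _ ⟨x, rfl⟩ _ ⟨y, rfl⟩
    rw [List.foldr_cons]
    have hx := congrFun hGe x
    have hy := congrFun hGe y
    simp only [Function.comp_apply] at hx hy ⊢
    rw [hx, hy]
    refine (hΓδ γ hγ _ _ (lt_of_le_of_lt ?_ hk)).le
    calc dist (s (G (ρ x))) (s (G (ρ y))) ≤ 1 * dist (G (ρ x)) (G (ρ y)) := by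
          simpa using ((hSL s hs).weaken hn1).dist_le_mul (G (ρ x)) (G (ρ y))
      _ ≤ 2⁻¹ ^ k * dist (ρ x) (ρ y) := by
          simpa using hG.dist_le_mul (ρ x) (ρ y)
      _ ≤ 2⁻¹ ^ k * diam (univ : Set K) := by
          gcongr
          exact dist_le_diam_of_mem isCompact_univ.isBounded (mem_univ _) (mem_univ _)
  · refine eq_univ_of_forall fun x => ?_
    obtain ⟨γ, hγ, a, rfl⟩ := hcov x
    obtain ⟨s, hs, b, rfl⟩ := hSc a
    obtain ⟨z, rfl⟩ := hρs b
    exact mem_biUnion ⟨γ, hγ, s, hs, rfl⟩ ⟨z, rfl⟩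

section TietzeExtension

theorem tietzeExtension_of_homeomorph_range {Y : Type*} [TopologicalSpace Y]
    {r : (ℕ → Icc (0 : ℝ) 1) → (ℕ → Icc (0 : ℝ) 1)} (hr : Continuous r) (hrr : r ∘ r = r)
    (e : Y ≃ₜ range r) : TietzeExtension.{0} Y := by
  have hret : TietzeExtension.{0} (range r) := by
    refine TietzeExtension.of_retract ⟨Subtype.val, continuous_subtype_val⟩
      ⟨rangeFactorization r, hr.subtype_mk _⟩ ?_
    ext1 ⟨_, y, rfl⟩
    exact Subtype.ext (congrFun hrr y)
  exact TietzeExtension.of_homeo e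

theorem exists_retraction_of_isClosed {X : Set (ℝ × ℝ)} (hX : IsClosed X)
    [TietzeExtension.{0} X] : ∃ R : C(ℝ × ℝ, X), ∀ x : X, R x = x := by
  obtain ⟨R, hR⟩ := (ContinuousMap.id X).exists_restrict_eq hX
  exact ⟨R, fun x => DFunLike.congr_fun hR x⟩

theorem isQuotientMap_of_retraction {X : Set (ℝ × ℝ)} (R : C(ℝ × ℝ, X))
    (hR : ∀ x : X, R x = x) : IsQuotientMap R :=
  IsQuotientMap.of_inverse continuous_subtype_val R.continuous hR

theorem pathConnectedSpace_of_retraction {X : Set (ℝ × ℝ)} (R : C(ℝ × ℝ, X))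
    (hR : ∀ x : X, R x = x) : PathConnectedSpace X :=
  (show Function.Surjective R from fun x => ⟨x, hR x⟩).pathConnectedSpace R.continuous

/-- Every nonempty compact metric absolute extensor is the image of a path. -/
theorem exists_continuous_image_Icc_eq_univ {Y : Type*} [MetricSpace Y] [CompactSpace Y]
    [Nonempty Y] [TietzeExtension.{0} Y] :
    ∃ h : ℝ → Y, Continuous h ∧ h '' Icc 0 1 = univ := by
  obtain ⟨c, hc, hcs⟩ := exists_nat_bool_continuous_surjective_of_compact Y
  obtain ⟨g, hg⟩ := ContinuousMap.exists_restrict_eq isClosed_cantorSet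
    (⟨c ∘ cantorSetHomeomorphNatToBool, by fun_prop⟩ : C(cantorSet, Y))
  refine ⟨g, g.continuous, eq_univ_of_forall fun y => ?_⟩
  obtain ⟨b, rfl⟩ := hcs y
  obtain ⟨t, rfl⟩ := cantorSetHomeomorphNatToBool.surjective b
  exact ⟨t, cantorSet_subset_unitInterval t.2, DFunLike.congr_fun hg t⟩

/-- A surjective path in a path connected space can be closed up to a loop at any point. -/
theorem exists_loop_of_image_Icc_eq_univ {Y : Type*} [TopologicalSpace Y] [PathConnectedSpace Y]
    {h : ℝ → Y} (hh : Continuous h) (hs : h '' Icc 0 1 = univ) (p : Y) :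
    ∃ g : ℝ → Y, Continuous g ∧ g 0 = p ∧ g 1 = p ∧ g '' Icc 0 1 = univ := by
  let h' : Path (h 0) (h 1) := ⟨⟨fun t => h t, by fun_prop⟩, by simp, by simp⟩
  let q : Path p p := ((PathConnectedSpace.somePath p (h 0)).trans h').trans
    (PathConnectedSpace.somePath (h 1) p)
  refine ⟨q.extend, q.continuous_extend, q.extend_zero, q.extend_one, ?_⟩
  refine eq_univ_of_forall fun y => ?_
  have hy : y ∈ range q := by
    rw [Path.trans_range, Path.trans_range]
    obtain ⟨t, ht, rfl⟩ := hs.ge (mem_univ y)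
    exact Or.inl (Or.inr ⟨⟨t, ht⟩, rfl⟩)
  obtain ⟨t, rfl⟩ := hy
  exact ⟨t, t.2, by simp⟩

end TietzeExtension

section Interior

/-- The projection of the plane to the square `[-1/2, 1/2]²` which fixes this square pointwise
and sends the complement of the open unit ball to the centre. -/
noncomputable def squareFold (v : ℝ × ℝ) : ℝ × ℝ :=
  (max (-(max 0 (min (1 / 2) (1 - ‖v‖)))) (min (max 0 (min (1 / 2) (1 - ‖v‖))) v.1),
    max (-(max 0 (min (1 / 2) (1 - ‖v‖)))) (min (max 0 (min (1 / 2) (1 - ‖v‖))) v.2))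

theorem lipschitzWith_squareFold : ∃ L, LipschitzWith L squareFold := by
  have ht : LipschitzWith 1 fun v : ℝ × ℝ => max 0 (min (1 / 2) (1 - ‖v‖)) := by
    refine LipschitzWith.const_max (LipschitzWith.const_min ?_ _) _
    simpa using (LipschitzWith.const (1 : ℝ)).sub (lipschitzWith_one_norm (E := ℝ × ℝ))
  have hc : ∀ {c : ℝ × ℝ → ℝ}, LipschitzWith 1 c → LipschitzWith 1 fun v =>
      max (-(max 0 (min (1 / 2) (1 - ‖v‖)))) (min (max 0 (min (1 / 2) (1 - ‖v‖))) (c v)) := by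
    intro c h
    simpa using ht.neg.max (ht.min h)
  exact ⟨_, (hc LipschitzWith.prod_fst).prodMk (hc LipschitzWith.prod_snd)⟩

theorem squareFold_of_one_le_norm {v : ℝ × ℝ} (hv : 1 ≤ ‖v‖) : squareFold v = 0 := by
  have h : max 0 (min (1 / 2) (1 - ‖v‖)) = 0 :=
    max_eq_left ((min_le_right _ _).trans (by linarith))
  simp only [squareFold, h]
  ext <;> simp

theorem squareFold_of_norm_le {v : ℝ × ℝ} (hv : ‖v‖ ≤ 1 / 2) : squareFold v = v := by
  have h : max 0 (min (1 / 2) (1 - ‖v‖)) = 1 / 2 := by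
    rw [min_eq_left (by linarith), max_eq_right (by norm_num)]
  have h1 := abs_le.1 ((norm_fst_le v).trans hv)
  have h2 := abs_le.1 ((norm_snd_le v).trans hv)
  simp only [squareFold, h]
  ext
  · rw [min_eq_right h1.2, max_eq_right h1.1]
  · rw [min_eq_right h2.2, max_eq_right h2.1]

theorem norm_squareFold_le (v : ℝ × ℝ) : ‖squareFold v‖ ≤ 1 / 2 := by
  have h0 : 0 ≤ max 0 (min (1 / 2) (1 - ‖v‖)) := le_max_left _ _
  have h1 : max 0 (min (1 / 2) (1 - ‖v‖)) ≤ 1 / 2 := max_le (by norm_num) (min_le_left _ _)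
  rw [Prod.norm_def, max_le_iff, Real.norm_eq_abs, Real.norm_eq_abs, abs_le, abs_le]
  simp only [squareFold]
  generalize max 0 (min (1 / 2) (1 - ‖v‖)) = t at h0 h1
  refine ⟨⟨le_trans (by linarith) (le_max_left _ _), max_le (by linarith)
    ((min_le_left _ _).trans h1)⟩, ⟨le_trans (by linarith) (le_max_left _ _), max_le (by linarith)
    ((min_le_left _ _).trans h1)⟩⟩

theorem exists_lipschitzWith_near {E : Type*} [NormedAddCommGroup E] [NormedSpace ℝ E]
    {h : ℝ → E} (hh : Continuous h) {ε : ℝ} (hε : 0 < ε) :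
    ∃ (g : I → E) (L : ℝ≥0), LipschitzWith L g ∧ ∀ t : I, dist (g t) (h t) < ε := by
  obtain ⟨g, hg, hd, -⟩ := hh.exists_contDiff_approx 1 (continuous_const (y := ε)) fun _ => hε
  obtain ⟨L, hL⟩ := (hg.contDiffOn (s := Icc (0 : ℝ) 1)).exists_lipschitzOnWith (by norm_num)
    (convex_Icc 0 1) isCompact_Icc
  exact ⟨fun t => g t, L, hL.to_restrict, fun t => hd t⟩

/-- A Peano continuum in the plane with an interior point is a topological fractal. -/
theorem isTopologicalFractal_of_interior_nonempty {X : Set (ℝ × ℝ)}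
    {h : ℝ → X} (hh : Continuous h) (hs : h '' Icc 0 1 = univ) (hXint : (interior X).Nonempty) :
    IsTopologicalFractal X := by
  obtain ⟨p, hp⟩ := hXint
  obtain ⟨R, hR, hRX⟩ := nhds_basis_closedBall.mem_iff.1 (mem_interior_iff_mem_nhds.1 hp)
  obtain ⟨r, hr, rfl⟩ : ∃ r > 0, 5 * r = R := ⟨R / 5, by positivity, by ring⟩
  obtain ⟨L₀, hL₀⟩ := lipschitzWith_squareFold
  obtain ⟨g, Lg, hLg, hg⟩ := exists_lipschitzWith_near
    (continuous_subtype_val.comp hh) hr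
  simp only [Function.comp_apply] at hg
  let N : ℝ × ℝ → ℝ × ℝ := fun x => r⁻¹ • (x - p)
  have hN : LipschitzWith ‖r⁻¹‖₊ N := by
    refine LipschitzWith.of_dist_le_mul fun x y => ?_
    rw [dist_smul₀, dist_sub_right, coe_nnnorm]
  have hNn : ∀ x, ‖N x‖ = r⁻¹ * dist x p := fun x => by
    rw [norm_smul, Real.norm_of_nonneg (by positivity), dist_eq_norm]
  have hmem : ∀ v : ℝ × ℝ, ((squareFold v).1 + 1 / 2 ∈ Icc (0 : ℝ) 1) ∧
      ((squareFold v).2 + 1 / 2 ∈ Icc (0 : ℝ) 1) := fun v => by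
    have h1 := abs_le.1 ((norm_fst_le _).trans (norm_squareFold_le v))
    have h2 := abs_le.1 ((norm_snd_le _).trans (norm_squareFold_le v))
    exact ⟨⟨by linarith, by linarith⟩, ⟨by linarith, by linarith⟩⟩
  let S : ℝ × ℝ → I × I := fun v => (⟨_, (hmem v).1⟩, ⟨_, (hmem v).2⟩)
  have hS : LipschitzWith L₀ S := by
    refine LipschitzWith.of_dist_le_mul fun v w => ?_
    have := hL₀.dist_le_mul v w
    rw [Prod.dist_eq] at this ⊢
    simpa [S, Subtype.dist_eq] using this
  let ρ : ℝ × ℝ → I × I := S ∘ N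
  have hρ : LipschitzWith (L₀ * ‖r⁻¹‖₊) ρ := hS.comp hN
  have hρfar : ∀ x y, r ≤ dist x p → r ≤ dist y p → ρ x = ρ y := by
    have aux : ∀ x, r ≤ dist x p → squareFold (N x) = 0 := fun x hx =>
      squareFold_of_one_le_norm (by rw [hNn, ← div_eq_inv_mul, one_le_div hr]; exact hx)
    intro x y hx hy
    simp [ρ, S, aux x hx, aux y hy]
  have hsurj : Function.Surjective fun x : X => ρ x := by
    rintro ⟨⟨a, ha0, ha1⟩, ⟨b, hb0, hb1⟩⟩
    let v : ℝ × ℝ := (a - 1 / 2, b - 1 / 2)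
    have hv : ‖v‖ ≤ 1 / 2 := by
      rw [Prod.norm_def, max_le_iff, Real.norm_eq_abs, Real.norm_eq_abs, abs_le, abs_le]
      simp only [v]
      refine ⟨⟨?_, ?_⟩, ?_, ?_⟩ <;> linarith
    have hNv : N (p + r • v) = v := by simp [N, smul_smul, hr.ne']
    refine ⟨⟨p + r • v, hRX ?_⟩, ?_⟩
    · rw [mem_closedBall, dist_self_add_left, norm_smul, Real.norm_of_nonneg hr.le]
      nlinarith
    · have hfold : squareFold (N (p + r • v)) = v := by rw [hNv, squareFold_of_norm_le hv]
      simp only [ρ, S, Function.comp_apply, hfold]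
      simp [v]
  let E : I × I → ℝ × ℝ := fun q => p + (4 * r) • (2 * (q.1 : ℝ) - 1, 2 * (q.2 : ℝ) - 1)
  have hE : LipschitzWith (‖4 * r‖₊ * 2) E := by
    refine LipschitzWith.of_dist_le_mul fun q q' => ?_
    have h2 : dist ((2 * (q.1 : ℝ) - 1, 2 * (q.2 : ℝ) - 1) : ℝ × ℝ)
        (2 * (q'.1 : ℝ) - 1, 2 * (q'.2 : ℝ) - 1) ≤ 2 * dist q q' := by
      have e : ∀ a b : ℝ, dist (2 * a - 1) (2 * b - 1) = 2 * dist a b := fun a b => by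
        rw [Real.dist_eq, Real.dist_eq, sub_sub_sub_cancel_right, ← mul_sub, abs_mul]
        norm_num
      rw [Prod.dist_eq, Prod.dist_eq, e, e, mul_max_of_nonneg _ _ (by norm_num)]
      rfl
    rw [dist_add_left, dist_smul₀, NNReal.coe_mul, coe_nnnorm, mul_assoc]
    gcongr
    exact h2
  have hEX : ∀ q, E q ∈ X := by
    rintro ⟨⟨a, ha0, ha1⟩, ⟨b, hb0, hb1⟩⟩
    refine hRX ?_
    rw [mem_closedBall, dist_self_add_left, norm_smul, Real.norm_of_nonneg (by positivity)]
    have : ‖((2 * a - 1, 2 * b - 1) : ℝ × ℝ)‖ ≤ 1 := by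
      rw [Prod.norm_def, max_le_iff, Real.norm_eq_abs, Real.norm_eq_abs, abs_le, abs_le]
      refine ⟨⟨?_, ?_⟩, ?_, ?_⟩ <;> linarith
    nlinarith
  have hEs : ∀ x, dist x p ≤ 4 * r → ∃ q, E q = x := by
    intro x hx
    have hn : ‖(4 * r)⁻¹ • (x - p)‖ ≤ 1 := by
      rw [norm_smul, Real.norm_of_nonneg (by positivity), ← dist_eq_norm, ← div_eq_inv_mul]
      exact (div_le_one (by positivity)).2 hx
    have h1 := abs_le.1 ((norm_fst_le _).trans hn)
    have h2 := abs_le.1 ((norm_snd_le _).trans hn)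
    refine ⟨(⟨(((4 * r)⁻¹ • (x - p)).1 + 1) / 2, by linarith, by linarith⟩,
      ⟨(((4 * r)⁻¹ • (x - p)).2 + 1) / 2, by linarith, by linarith⟩), ?_⟩
    ext <;> simp only [E, Prod.fst_add, Prod.snd_add, Prod.smul_fst, Prod.smul_snd, smul_eq_mul,
      Prod.fst_sub, Prod.snd_sub] <;> field_simp <;> ring
  let φ : ℝ × ℝ → ℝ := fun x => max 0 (min 1 (4 - r⁻¹ * dist x p))
  have hφ : Continuous φ := by fun_prop
  have hφ0 : ∀ x, 0 ≤ φ x := fun x => le_max_left _ _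
  have hφ1 : ∀ x, φ x ≤ 1 := fun x => max_le zero_le_one (min_le_left _ _)
  have hφfar : ∀ x, 4 * r ≤ dist x p → φ x = 0 := fun x hx => by
    have : 4 ≤ r⁻¹ * dist x p := by rwa [← div_eq_inv_mul, le_div_iff₀ hr]
    exact max_eq_left ((min_le_right _ _).trans (by linarith))
  have hφnear : ∀ x, dist x p ≤ 3 * r → φ x = 1 := fun x hx => by
    have : r⁻¹ * dist x p ≤ 3 := by rwa [← div_eq_inv_mul, div_le_iff₀ hr]
    simp only [φ]
    rw [min_eq_left (by linarith), max_eq_right zero_le_one]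
  let H : I → ℝ × ℝ := fun t => (h t : ℝ × ℝ) + φ (h t) • (g t - h t)
  have hHc : Continuous H := by
    have := hLg.continuous
    fun_prop
  have hHd : ∀ t, dist (H t) (h t) ≤ r := fun t => by
    have h1 := (hg t).le
    rw [dist_eq_norm] at h1
    rw [dist_self_add_left, norm_smul, Real.norm_of_nonneg (hφ0 _)]
    nlinarith [hφ1 (h t), hφ0 (h t), norm_nonneg (g t - h t)]
  have hHfar : ∀ t : I, 4 * r ≤ dist (h t : ℝ × ℝ) p → H t = h t := fun t ht => by
    simp [H, hφfar _ ht]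
  have hHX : ∀ t, H t ∈ X := fun t => by
    rcases le_total (4 * r) (dist (h t : ℝ × ℝ) p) with ht | ht
    · rw [hHfar t ht]
      exact (h t).2
    · refine hRX ?_
      have := dist_triangle (H t) (h t) p
      rw [mem_closedBall]
      linarith [hHd t]
  have hρH : ∀ t, ρ (H t) = ρ (g t) := fun t => by
    rcases le_total (dist (h t : ℝ × ℝ) p) (3 * r) with ht | ht
    · simp [H, hφnear _ ht]
    · have h1 := dist_triangle_left (h t : ℝ × ℝ) p (H t)
      have h2 := dist_triangle_left (h t : ℝ × ℝ) p (g t)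
      exact hρfar _ _ (by linarith [hHd t]) (by linarith [hg t])
  refine IsTopologicalFractal.of_lipschitzWith_comp
    (hasFineContractions_unitInterval.prod hasFineContractions_unitInterval)
    (ρ := fun x : X => ρ x) (hρ.continuous.comp continuous_subtype_val) hsurj
    (Γ := {fun q => ⟨E q, hEX q⟩, fun q => ⟨H q.1, hHX q.1⟩}) (toFinite _) ?_ ?_
    (L := max (L₀ * ‖r⁻¹‖₊ * (‖4 * r‖₊ * 2)) (L₀ * ‖r⁻¹‖₊ * Lg)) ?_
  · rintro _ (rfl | rfl)
    · exact hE.continuous.subtype_mk _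
    · exact (hHc.comp continuous_fst).subtype_mk _
  · rintro ⟨x, hx⟩
    rcases le_total (dist x p) (4 * r) with hxp | hxp
    · obtain ⟨q, rfl⟩ := hEs x hxp
      exact ⟨_, Or.inl rfl, q, rfl⟩
    · obtain ⟨t, ht, hxt⟩ := hs.ge (mem_univ ⟨x, hx⟩)
      refine ⟨_, Or.inr rfl, (⟨t, ht⟩, 0), Subtype.ext ?_⟩
      have := congrArg Subtype.val hxt
      simp only at this
      subst this
      exact hHfar ⟨t, ht⟩ hxp
  · rintro _ (rfl | rfl)
    · exact (hρ.comp hE).weaken (le_max_left _ _)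
    · have : ((fun x : X => ρ x) ∘ fun q : I × I => (⟨H q.1, hHX q.1⟩ : X)) = (ρ ∘ g) ∘ Prod.fst :=
        funext fun q => hρH q.1
      rw [this]
      exact (((hρ.comp hLg).comp LipschitzWith.prod_fst).weaken (by simp))

end Interior

section ArcRetraction

/-- There is a Lipschitz monotone surjection of the unit interval onto itself with nondegenerate
fibres over any given sequence of points. -/
theorem exists_lipschitzWith_monotone_plateaus (s : ℕ → ℝ) :
    ∃ M : ℝ → ℝ, Monotone M ∧ LipschitzWith 3 M ∧ M 0 = 0 ∧ M 1 = 1 ∧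
      (∀ t, M t ∈ Icc (0 : ℝ) 1) ∧
      ∀ n, s n ∈ Icc (0 : ℝ) 1 → ∃ l ∈ Icc (0 : ℝ) 1, ∃ r ∈ Icc (0 : ℝ) 1,
        l < r ∧ M l = s n ∧ M r = s n := by
  let w : ℕ → ℝ := fun n => (1 / 2) / 2 ^ n
  have hw : HasSum w 1 := hasSum_geometric_two' 1
  have hw0 : ∀ n, 0 < w n := fun n => by positivity
  let c : ℝ → ℕ → ℝ := fun x n => if s n < x then w n else 0
  have hc0 : ∀ x n, 0 ≤ c x n := fun x n => by
    simp only [c]; split_ifs <;> [exact (hw0 n).le; exact le_rfl]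
  have hcw : ∀ x n, c x n ≤ w n := fun x n => by
    simp only [c]; split_ifs <;> [exact le_rfl; exact (hw0 n).le]
  have hcs : ∀ x, Summable (c x) := fun x => hw.summable.of_nonneg_of_le (hc0 x) (hcw x)
  let ψ : ℝ → ℝ := fun x => x + ∑' n, c x n
  have hcmono : ∀ {x y}, x ≤ y → ∀ n, c x n ≤ c y n := by
    intro x y hxy n
    simp only [c]
    split_ifs with h1 h2
    · exact le_rfl
    · exact absurd (h1.trans_le hxy) h2
    · exact (hw0 n).le
    · exact le_rfl
  have hψ : ∀ {x y}, x ≤ y → ψ x + (y - x) ≤ ψ y := by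
    intro x y hxy
    have := (hcs x).tsum_le_tsum (hcmono hxy) (hcs y)
    simp only [ψ]
    linarith
  have hψw : ∀ n {y}, s n < y → ψ (s n) + w n + (y - s n) ≤ ψ y := by
    intro n y hy
    have h1 : HasSum (Pi.single n (w n)) (w n) := hasSum_pi_single n (w n)
    have h2 : ∑' k, c (s n) k + w n ≤ ∑' k, c y k := by
      refine hasSum_le (fun k => ?_) ((hcs (s n)).hasSum.add h1) (hcs y).hasSum
      by_cases hk : k = n
      · subst hk
        simp [c, hy]
      · simpa [hk] using hcmono hy.le k
    simp only [ψ]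
    linarith
  have hψle : ∀ x, ψ x ≤ x + 1 := fun x => by
    have := (hcs x).tsum_le_tsum (hcw x) hw.summable
    rw [hw.tsum_eq] at this
    simp only [ψ]
    linarith
  have hψge : ∀ x, x ≤ ψ x := fun x => by
    have : 0 ≤ ∑' n, c x n := tsum_nonneg (hc0 x)
    simp only [ψ]
    linarith
  let T : ℝ → Set ℝ := fun t => insert 0 {x ∈ Icc (0 : ℝ) 1 | ψ x ≤ 3 * t}
  have hTb : ∀ t, BddAbove (T t) := fun t =>
    ⟨1, by rintro x (rfl | ⟨hx, -⟩) <;> [exact zero_le_one; exact hx.2]⟩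
  have hTn : ∀ t, (T t).Nonempty := fun t => ⟨0, mem_insert _ _⟩
  let M : ℝ → ℝ := fun t => sSup (T t)
  have hMmem : ∀ t, M t ∈ Icc (0 : ℝ) 1 := fun t => ⟨le_csSup (hTb t) (mem_insert _ _),
    csSup_le (hTn t) (by rintro x (rfl | ⟨hx, -⟩) <;> [exact zero_le_one; exact hx.2])⟩
  have hMmono : Monotone M := fun t t' htt => csSup_le_csSup (hTb t') (hTn t)
    (insert_subset_insert fun x hx => ⟨hx.1, hx.2.trans (by linarith)⟩)
  have hMlip : ∀ t t', t ≤ t' → M t' ≤ M t + 3 * (t' - t) := by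
    intro t t' htt
    refine csSup_le (hTn t') ?_
    rintro x (rfl | ⟨hx, hxt⟩)
    · linarith [(hMmem t).1]
    · by_cases hx' : 0 ≤ x - 3 * (t' - t)
      · have h1 := hψ (show x - 3 * (t' - t) ≤ x by linarith)
        have : x - 3 * (t' - t) ≤ M t :=
          le_csSup (hTb t) (Or.inr ⟨⟨hx', by linarith [hx.2]⟩, by linarith⟩)
        linarith
      · linarith [(hMmem t).1]
  have hMpl : ∀ n, s n ∈ Icc (0 : ℝ) 1 → ∀ t, ψ (s n) ≤ 3 * t → 3 * t ≤ ψ (s n) + w n →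
      M t = s n := by
    intro n hn t h1 h2
    refine le_antisymm (csSup_le (hTn t) ?_) (le_csSup (hTb t) (Or.inr ⟨hn, h1⟩))
    rintro x (rfl | ⟨hx, hxt⟩)
    · exact hn.1
    · by_contra! hlt
      linarith [hψw n hlt]
  refine ⟨M, hMmono, ?_, ?_, ?_, hMmem, ?_⟩
  · refine LipschitzWith.of_dist_le_mul fun t t' => ?_
    wlog htt : t ≤ t' generalizing t t'
    · rw [dist_comm, dist_comm t]
      exact this t' t (le_of_not_ge htt)
    · rw [dist_comm, dist_comm t, Real.dist_eq, Real.dist_eq, abs_of_nonneg (sub_nonneg.2 (hMmono htt)),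
        abs_of_nonneg (sub_nonneg.2 htt)]
      have := hMlip t t' htt
      push_cast
      linarith
  · refine le_antisymm (csSup_le (hTn 0) ?_) (hMmem 0).1
    rintro x (rfl | ⟨hx, hxt⟩)
    · exact le_rfl
    · linarith [hψge x]
  · refine le_antisymm (hMmem 1).2 (le_csSup (hTb 1) (Or.inr ⟨⟨zero_le_one, le_rfl⟩, ?_⟩))
    linarith [hψle 1]
  · intro n hn
    have h1 := hψle (s n)
    have h2 := hψge (s n)
    have h3 : w n ≤ 1 := le_hasSum hw n fun k _ => (hw0 k).le
    have h4 := hw0 n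
    refine ⟨ψ (s n) / 3, ⟨by linarith [hn.1], by linarith [hn.2]⟩, (ψ (s n) + w n) / 3,
      ⟨by linarith [hn.1], by linarith [hn.2]⟩, by linarith, hMpl n hn _ ?_ ?_,
      hMpl n hn _ ?_ ?_⟩ <;> linarith

/-- If `ρ` is locally constant off a set `A` meeting the fibre over `ρ a` only in `a`, then
the fibres over other values converge to `a`. -/
theorem eventually_preimage_subset_of_locally_constant_off {X : Type*} [TopologicalSpace X]
    [CompactSpace X] {ρ : X → ℝ} (hρ : Continuous ρ) {A : Set X} (hinj : InjOn ρ A)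
    (hloc : ∀ x ∉ A, ∀ᶠ y in 𝓝 x, ρ y = ρ x) {a : X} (ha : a ∈ A) {U : Set X} (hU : U ∈ 𝓝 a) :
    ∀ᶠ s in 𝓝 (ρ a), s ≠ ρ a → ∀ x, ρ x = s → x ∈ U := by
  have hK : IsCompact ((interior U)ᶜ \ interior (ρ ⁻¹' {ρ a})) :=
    (isOpen_interior.isClosed_compl.sdiff isOpen_interior).isCompact
  have hnot : ρ a ∉ ρ '' ((interior U)ᶜ \ interior (ρ ⁻¹' {ρ a})) := by
    rintro ⟨x, ⟨hxU, hxW⟩, hxa⟩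
    by_cases hxA : x ∈ A
    · exact hxU (hinj hxA ha hxa ▸ mem_interior_iff_mem_nhds.2 hU)
    · refine hxW (mem_interior_iff_mem_nhds.2 ?_)
      filter_upwards [hloc x hxA] with y hy
      exact hy.trans hxa
  filter_upwards [(hK.image hρ).isClosed.isOpen_compl.mem_nhds hnot] with s hs hne x hx
  by_contra hxU
  refine hs ⟨x, ⟨fun h => hxU (interior_subset h), fun h => hne ?_⟩, hx⟩
  have hxa : x ∈ ρ ⁻¹' {ρ a} := interior_subset h
  exact hx.symm.trans hxa

/-- Let `A` be a set mapped bijectively onto the unit interval by a function `ρ` which is locally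
constant off `A`. Then a Peano continuum is swept out by a path along which `ρ` is Lipschitz. -/
theorem exists_path_lipschitz_of_locally_constant_off {X : Type*} [TopologicalSpace X]
    [CompactSpace X] [T2Space X] [SecondCountableTopology X] [PathConnectedSpace X]
    {h : ℝ → X} (hh : Continuous h) (hs : h '' Icc 0 1 = univ) {ρ : X → ℝ} (hρ : Continuous ρ)
    (hmem : ∀ x, ρ x ∈ Icc (0 : ℝ) 1) {A : Set X} (hA : BijOn ρ A (Icc 0 1))
    (hloc : ∀ x ∉ A, ∀ᶠ y in 𝓝 x, ρ y = ρ x) :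
    ∃ γ : I → X, Continuous γ ∧ Function.Surjective γ ∧ LipschitzWith 3 (ρ ∘ γ) := by
  classical
  have hα : ∀ s : ℝ, ∃ a ∈ A, s ∈ Icc (0 : ℝ) 1 → ρ a = s := by
    intro s
    by_cases hsI : s ∈ Icc (0 : ℝ) 1
    · obtain ⟨a, ha, rfl⟩ := hA.surjOn hsI
      exact ⟨a, ha, fun _ => rfl⟩
    · obtain ⟨a, ha, -⟩ := hA.surjOn (left_mem_Icc.2 zero_le_one)
      exact ⟨a, ha, fun h => absurd h hsI⟩
  choose α hαA hα using hα
  have hαρ : ∀ x ∈ A, α (ρ x) = x := fun x hx =>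
    hA.injOn (hαA _) hx (hα _ (hmem x))
  obtain ⟨g, hg, hg0, hg1, hgs⟩ := exists_loop_of_image_Icc_eq_univ hh hs (α 0)
  let ret : ℝ → X → X := fun s x => if ρ x = s then x else α s
  have hretA : ∀ s ∈ Icc (0 : ℝ) 1, ∀ x ∈ A, ret s x = α s := by
    intro s hs x hx
    simp only [ret]
    split_ifs with h
    · rw [← h, hαρ x hx]
    · rfl
  have hretρ : ∀ s ∈ Icc (0 : ℝ) 1, ∀ x, ρ (ret s x) = s := by
    intro s hs x
    simp only [ret]
    split_ifs with h
    · exact h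
    · exact hα s hs
  have hret : ∀ s ∈ Icc (0 : ℝ) 1, Continuous (ret s) := by
    intro s hs
    refine continuous_iff_continuousAt.2 fun x => ?_
    by_cases hx : ρ x = s
    · by_cases hxA : x ∈ A
      · intro U hU
        rw [hretA s hs x hxA] at hU
        have hxs : x = α s := by rw [← hx, hαρ x hxA]
        rw [← hxs] at hU
        change ret s ⁻¹' U ∈ 𝓝 x
        filter_upwards [hU] with y hy
        change ret s y ∈ U
        simp only [ret]
        split_ifs
        · exact hy
        · exact hxs ▸ mem_of_mem_nhds hU
      · refine continuousAt_id.congr ?_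
        filter_upwards [hloc x hxA] with y hy
        simp [ret, hy, hx]
    · refine (continuousAt_const (y := α s)).congr ?_
      filter_upwards [hρ.continuousAt.eventually_ne hx] with y hy
      simp [ret, hy]
  have : Nonempty X := ⟨α 0⟩
  obtain ⟨M, hMmono, hMlip, hM0, hM1, hMmem, hMpl⟩ :=
    exists_lipschitzWith_monotone_plateaus fun n => ρ (TopologicalSpace.denseSeq X n)
  have hMc : Continuous M := hMlip.continuous
  let P : ℝ → Set ℝ := fun s => Icc 0 1 ∩ M ⁻¹' {s}
  have hPc : ∀ s, IsCompact (P s) := fun s =>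
    isCompact_Icc.inter_right (isClosed_singleton.preimage hMc)
  have hPn : ∀ s ∈ Icc (0 : ℝ) 1, (P s).Nonempty := by
    intro s hs
    obtain ⟨t, ht, hts⟩ := intermediate_value_Icc zero_le_one hMc.continuousOn
      (show s ∈ Icc (M 0) (M 1) by rwa [hM0, hM1])
    exact ⟨t, ht, hts⟩
  let l : ℝ → ℝ := fun s => sInf (P s)
  let r : ℝ → ℝ := fun s => sSup (P s)
  have hl : ∀ s ∈ Icc (0 : ℝ) 1, l s ∈ P s := fun s hs => (hPc s).sInf_mem (hPn s hs)
  have hr : ∀ s ∈ Icc (0 : ℝ) 1, r s ∈ P s := fun s hs => (hPc s).sSup_mem (hPn s hs)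
  have hlP : ∀ s, ∀ t ∈ P s, l s ≤ t := fun s t ht => csInf_le (hPc s).bddBelow ht
  have hrP : ∀ s, ∀ t ∈ P s, t ≤ r s := fun s t ht => le_csSup (hPc s).bddAbove ht
  have hPord : ∀ s ∈ Icc (0 : ℝ) 1, ∀ t, l s ≤ t → t ≤ r s → M t = s := fun s hs t h1 h2 =>
    le_antisymm ((hMmono h2).trans_eq (hr s hs).2) ((hl s hs).2.symm.trans_le (hMmono h1))
  let B : ℝ → ℝ → X := fun s t => ret s (g ((t - l s) / (r s - l s)))
  have hBc : ∀ s ∈ Icc (0 : ℝ) 1, Continuous (B s) := fun s hs =>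
    (hret s hs).comp (hg.comp (by fun_prop))
  have hBl : ∀ s ∈ Icc (0 : ℝ) 1, B s (l s) = α s := fun s hs => by
    simp only [B, sub_self, zero_div, hg0]
    exact hretA s hs _ (hαA 0)
  have hBr : ∀ s ∈ Icc (0 : ℝ) 1, B s (r s) = α s := fun s hs => by
    rcases (hlP s _ (hr s hs)).eq_or_lt with h | h
    · rw [← h, hBl s hs]
    · simp only [B]
      rw [div_self (sub_pos.2 h).ne', hg1]
      exact hretA s hs _ (hαA 0)
  have hcont : Continuous fun t : I => B (M t) t := by
    refine continuous_iff_continuousAt.2 fun t₀ => ?_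
    intro U hU
    change (fun t : I => B (M t) t) ⁻¹' U ∈ 𝓝 t₀
    have hs₀ := hMmem t₀
    have hsame : ∀ᶠ t : I in 𝓝 t₀, B (M t₀) t ∈ U :=
      ((hBc _ hs₀).comp continuous_subtype_val).continuousAt.eventually hU
    have hdiff : ∀ᶠ t : I in 𝓝 t₀, M t ≠ M t₀ → B (M t) t ∈ U := by
      have hend : B (M t₀) t₀ = α (M t₀) → ∀ᶠ t : I in 𝓝 t₀, M t ≠ M t₀ → B (M t) t ∈ U := by
        intro he
        have hU' : U ∈ 𝓝 (α (M t₀)) := he ▸ hU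
        have h1 := eventually_preimage_subset_of_locally_constant_off hρ hA.injOn hloc
          (hαA (M t₀)) hU'
        rw [hα _ hs₀] at h1
        have hMt : Tendsto (fun t : I => M t) (𝓝 t₀) (𝓝 (M t₀)) :=
          (hMc.comp continuous_subtype_val).continuousAt
        filter_upwards [hMt.eventually h1] with t ht hne
        exact ht hne _ (hretρ _ (hMmem t) _)
      have ht₀ : (t₀ : ℝ) ∈ P (M t₀) := ⟨t₀.2, rfl⟩
      rcases (hlP _ _ ht₀).eq_or_lt with h1 | h1
      · refine hend ?_
        have := hBl _ hs₀
        rwa [h1] at this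
      rcases (hrP _ _ ht₀).eq_or_lt with h2 | h2
      · refine hend ?_
        have := hBr _ hs₀
        rwa [← h2] at this
      · filter_upwards [continuous_subtype_val.continuousAt.preimage_mem_nhds
          (Ioo_mem_nhds h1 h2)] with t ht hne
        exact absurd (hPord _ hs₀ t ht.1.le ht.2.le) hne
    filter_upwards [hsame, hdiff] with t h1 h2
    by_cases h : M t = M t₀
    · change B (M t) t ∈ U
      rwa [h]
    · exact h2 h
  refine ⟨fun t => B (M t) t, hcont, fun x => ?_, ?_⟩
  · have hx := hmem x
    by_cases hxA : x ∈ A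
    · refine ⟨⟨l (ρ x), (hl _ hx).1⟩, ?_⟩
      have : M (l (ρ x)) = ρ x := (hl _ hx).2
      simp only [this]
      rw [hBl _ hx, hαρ x hxA]
    · obtain ⟨n, hn⟩ := (TopologicalSpace.denseRange_denseSeq X).exists_mem_open
        isOpen_interior ⟨x, mem_interior_iff_mem_nhds.2 (hloc x hxA)⟩
      have hn' : TopologicalSpace.denseSeq X n ∈ {y | ρ y = ρ x} := interior_subset hn
      rw [mem_ofPred_eq] at hn'
      obtain ⟨a, ha, b, hb, hab, hMa, hMb⟩ := hMpl n (hmem _)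
      rw [hn'] at hMa hMb
      have hlr : l (ρ x) < r (ρ x) :=
        (hlP _ a ⟨ha, hMa⟩).trans_lt (hab.trans_le (hrP _ b ⟨hb, hMb⟩))
      obtain ⟨u, hu, hux⟩ := hgs.ge (mem_univ x)
      have hlr' := sub_pos.2 hlr
      have ht1 : l (ρ x) ≤ l (ρ x) + u * (r (ρ x) - l (ρ x)) := by
        nlinarith [hu.1]
      have ht2 : l (ρ x) + u * (r (ρ x) - l (ρ x)) ≤ r (ρ x) := by
        nlinarith [hu.2]
      refine ⟨⟨l (ρ x) + u * (r (ρ x) - l (ρ x)), (hl _ hx).1.1.trans ht1,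
        ht2.trans (hr _ hx).1.2⟩, ?_⟩
      have hMt := hPord _ hx _ ht1 ht2
      simp only [hMt, B]
      rw [add_sub_cancel_left, mul_div_cancel_right₀ _ hlr'.ne', hux]
      simp [ret]
  · have : (ρ ∘ fun t : I => B (M t) t) = fun t : I => M t :=
      funext fun t => hretρ _ (hMmem t) _
    rw [this]
    simpa using! hMlip.comp (LipschitzWith.subtype_val (· ∈ I))

theorem isTopologicalFractal_of_locally_constant_off {X : Type*} [MetricSpace X]
    [CompactSpace X] [PathConnectedSpace X]
    {h : ℝ → X} (hh : Continuous h) (hs : h '' Icc 0 1 = univ) {ρ : X → ℝ} (hρ : Continuous ρ)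
    (hmem : ∀ x, ρ x ∈ Icc (0 : ℝ) 1) {A : Set X} (hA : BijOn ρ A (Icc 0 1))
    (hloc : ∀ x ∉ A, ∀ᶠ y in 𝓝 x, ρ y = ρ x) : IsTopologicalFractal X := by
  obtain ⟨γ, hγ, hγs, hγL⟩ := exists_path_lipschitz_of_locally_constant_off hh hs hρ hmem hA hloc
  refine IsTopologicalFractal.of_lipschitzWith_comp hasFineContractions_unitInterval
    (ρ := fun x => ⟨ρ x, hmem x⟩) (hρ.subtype_mk _) ?_ (finite_singleton γ) ?_ ?_ (L := 3) ?_
  · rintro ⟨s, hs⟩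
    obtain ⟨a, -, rfl⟩ := hA.surjOn hs
    exact ⟨a, rfl⟩
  · rintro _ rfl
    exact hγ
  · exact fun x => ⟨γ, rfl, hγs x⟩
  · rintro _ rfl
    exact hγL

end ArcRetraction

section Unicoherence

open MeasureTheory in
/-- A continuous self-map of a finite-dimensional space can be perturbed so as not to vanish on a
given compact set with empty interior. -/
theorem exists_continuous_ne_zero_dist_lt {E : Type*} [NormedAddCommGroup E] [NormedSpace ℝ E]
    [FiniteDimensional ℝ E] {X : Set E} (hX : IsCompact X) (hXint : interior X = ∅)
    {f : E → E} (hf : Continuous f) {ε : ℝ} (hε : 0 < ε) :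
    ∃ q : E → E, Continuous q ∧ ∀ x ∈ X, q x ≠ 0 ∧ dist (q x) (f x) < ε := by
  borelize E
  obtain ⟨g, hg, hgf, -⟩ := hf.exists_contDiff_approx 1 (ε := fun _ => ε / 3) continuous_const
    (fun _ => by positivity)
  have hgd : Differentiable ℝ g := hg.differentiable (by norm_num)
  have hsard : (Measure.addHaar : Measure E) (g '' {x | (fderiv ℝ g x).det = 0}) = 0 :=
    addHaar_image_eq_zero_of_det_fderivWithin_eq_zero _
      (fun x _ => (hgd x).hasFDerivAt.hasFDerivWithinAt) fun x hx => hx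
  obtain ⟨c, hc, hcg⟩ : ∃ c ∈ ball (0 : E) (ε / 3), c ∉ g '' {x | (fderiv ℝ g x).det = 0} := by
    by_contra! hsub
    exact (measure_ball_pos Measure.addHaar (0 : E) (by positivity : 0 < ε / 3)).ne'
      (measure_mono_null hsub hsard)
  have hK : IsCompact (cthickening 1 X) := hX.cthickening
  have hZ : (cthickening 1 X ∩ g ⁻¹' {c}).Finite := by
    by_contra hinf
    obtain ⟨z, -, hz⟩ := Set.Infinite.exists_accPt_of_subset_isCompact hinf
      (hK.inter_right (isClosed_singleton.preimage hg.continuous)) Subset.rfl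
    have hzc : g z = c :=
      ((hK.inter_right (isClosed_singleton.preimage hg.continuous)).isClosed.closure_eq ▸
        mem_closure_iff_clusterPt.2 hz.clusterPt).2
    rw [accPt_iff_frequently_nhdsNE] at hz
    have hdet : (fderiv ℝ g z).det ≠ 0 := fun h => hcg ⟨z, h, hzc⟩
    have hne : ∀ᶠ y in 𝓝[≠] z, g y ≠ c := by
      exact (hgd z).hasFDerivAt.eventually_ne
        ⟨_, ((fderiv ℝ g z).toContinuousLinearEquivOfDetNeZero hdet).antilipschitz⟩
    exact hz (hne.mono fun y hy h => hy h.2)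
  obtain ⟨δ, hδ, hδg⟩ := Metric.uniformContinuousOn_iff.1
    (hK.uniformContinuousOn_of_continuous hg.continuous.continuousOn) (ε / 3) (by positivity)
  have hdense : Dense (⋂ z ∈ cthickening 1 X ∩ g ⁻¹' {c}, ((Homeomorph.subLeft z) ⁻¹' X)ᶜ) := by
    refine dense_biInter_of_isOpen (fun z _ => ?_) hZ.countable fun z _ => ?_
    · exact (hX.isClosed.preimage (Homeomorph.subLeft z).continuous).isOpen_compl
    · rw [← interior_eq_empty_iff_dense_compl, ← Homeomorph.preimage_interior, hXint, preimage_empty]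
  obtain ⟨w, hw, hwX⟩ := hdense.exists_mem_open (isOpen_ball (x := (0 : E)) (ε := min δ 1))
    ⟨0, mem_ball_self (by positivity)⟩
  rw [mem_ball_zero_iff, lt_min_iff] at hwX
  refine ⟨fun x => g (x + w) - c, by fun_prop (disch := exact hg.continuous), fun x hx => ?_⟩
  have hmem : x + w ∈ cthickening 1 X :=
    mem_cthickening_of_dist_le _ x 1 X hx (by simpa using hwX.2.le)
  refine ⟨fun h => ?_, ?_⟩
  · have := mem_iInter₂.1 hw (x + w) ⟨hmem, sub_eq_zero.1 h⟩
    simp [hx] at this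
  · have h1 := hδg (x + w) hmem x (self_subset_cthickening X hx) (by simpa using hwX.1)
    have h2 := hgf x
    have h3 : dist (g (x + w) - c) (g (x + w)) < ε / 3 := by simpa using hc
    linarith [dist_triangle4 (g (x + w) - c) (g (x + w)) (g x) (f x)]

/-- A continuous logarithm of `1` on a preconnected set is constant. -/
theorem IsPreconnected.eq_of_exp_eq_one {Y : Type*} [TopologicalSpace Y] {S : Set Y}
    (hS : IsPreconnected S) {v : Y → ℂ} (hv : ContinuousOn v S)
    (h1 : ∀ x ∈ S, Complex.exp (v x) = 1) {x y : Y} (hx : x ∈ S) (hy : y ∈ S) : v x = v y := by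
  have hT : DiscreteTopology (range ((↑) : ℤ → ℝ)) :=
    Int.isClosedEmbedding_coe_real.isEmbedding.toHomeomorph.symm.isEmbedding.discreteTopology
  have key : ∀ z ∈ S, ∃ n : ℤ, v z = n * (2 * Real.pi * Complex.I) := fun z hz =>
    Complex.exp_eq_one_iff.1 (h1 z hz)
  have hre : ∀ z ∈ S, v z = ((v z / (2 * Real.pi * Complex.I)).re : ℂ) * (2 * Real.pi * Complex.I)
      ∧ (v z / (2 * Real.pi * Complex.I)).re ∈ range ((↑) : ℤ → ℝ) := by
    intro z hz
    obtain ⟨n, hn⟩ := key z hz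
    rw [hn, mul_div_cancel_right₀ _ Complex.two_pi_I_ne_zero]
    exact ⟨by simp, n, by simp⟩
  have hconst := hS.constant_of_mapsTo (f := fun z => (v z / (2 * Real.pi * Complex.I)).re)
    (T := range ((↑) : ℤ → ℝ)) ⟨hT⟩
    (Complex.continuous_re.comp_continuousOn (hv.div_const _)) (fun z hz => (hre z hz).2) hx hy
  rw [(hre x hx).1, (hre y hy).1]
  rw [hconst]

/-- A planar compact retract with empty interior is hereditarily unicoherent. -/
theorem isPreconnected_inter_of_retraction {X : Set (ℝ × ℝ)} (hX : IsCompact X)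
    (hXint : interior X = ∅) (R : C(ℝ × ℝ, X)) (hR : ∀ x : X, R x = x) {A B : Set X}
    (hA : IsClosed A) (hB : IsClosed B) (hAc : IsPreconnected A) (hBc : IsPreconnected B) :
    IsPreconnected (A ∩ B) := by
  classical
  rw [isPreconnected_iff_subset_of_fully_disjoint_closed (hA.inter hB)]
  intro P Q hP hQ hPQ hdisj
  by_contra! hcon
  obtain ⟨y, hyAB, hyP⟩ := not_subset.1 hcon.1
  obtain ⟨x, hxAB, hxQ⟩ := not_subset.1 hcon.2
  have hyQ : y ∈ Q := (hPQ hyAB).resolve_left hyP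
  have hxP : x ∈ P := (hPQ hxAB).resolve_right hxQ
  obtain ⟨u, hu0, hu1, -⟩ := exists_continuous_zero_one_of_isClosed hP hQ hdisj
  let E : X → ℂ := fun z => Complex.exp ((u z : ℂ) * (2 * Real.pi * Complex.I))
  have hE : Continuous E := by fun_prop
  have hE1 : ∀ z ∈ A ∩ B, E z = 1 := by
    intro z hz
    rcases hPQ hz with h | h
    · simp [E, hu0 h]
    · simp [E, hu1 h]
  let f : X → ℂ := fun z => if z ∈ A then E z else 1
  have hfA : ∀ z ∈ A, f z = E z := fun z hz => if_pos hz
  have hfB : ∀ z ∈ B, f z = 1 := fun z hz => by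
    by_cases h : z ∈ A
    · rw [hfA z h, hE1 z ⟨h, hz⟩]
    · exact if_neg h
  have hfc : ContinuousOn f (A ∪ B) :=
    (hE.continuousOn.congr hfA).union_of_isClosed (continuousOn_const.congr hfB) hA hB
  have hfn : ∀ z, ‖f z‖ = 1 := by
    intro z
    simp only [f]
    split_ifs
    · simp only [E]
      rw [show (u z : ℂ) * (2 * Real.pi * Complex.I) = ((u z * (2 * Real.pi) : ℝ) : ℂ) * Complex.I by
        push_cast; ring]
      exact Complex.norm_exp_ofReal_mul_I _
    · simp
  obtain ⟨g, hg⟩ := ContinuousMap.exists_restrict_eq (hA.union hB)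
    (⟨(A ∪ B).domRestrict f, hfc.domRestrict⟩ : C((A ∪ B : Set X), ℂ))
  have hgf : ∀ z ∈ A ∪ B, g z = f z := fun z hz => DFunLike.congr_fun hg ⟨z, hz⟩
  let φ : ℂ ≃L[ℝ] ℝ × ℝ := Complex.equivRealProdCLM
  have hφ : 0 < ‖(φ.symm : ℝ × ℝ →L[ℝ] ℂ)‖ + 1 := by positivity
  obtain ⟨q, hq, hqX⟩ := exists_continuous_ne_zero_dist_lt hX hXint
    (f := fun z => φ (g (R z))) (by fun_prop)
    (show 0 < (1 / 2) / (‖(φ.symm : ℝ × ℝ →L[ℝ] ℂ)‖ + 1) by positivity)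
  have hqne : ∀ z : X, φ.symm (q z) ≠ 0 := fun z => by simpa using (hqX z z.2).1
  have hqd : ∀ z : X, ‖φ.symm (q z) - g z‖ < 1 / 2 := by
    intro z
    have h1 := (hqX z z.2).2
    rw [hR, lt_div_iff₀ hφ, dist_eq_norm] at h1
    have h2 : φ.symm (q z) - g z = (φ.symm : ℝ × ℝ →L[ℝ] ℂ) (q z - φ (g z)) := by simp
    rw [h2]
    refine ((φ.symm : ℝ × ℝ →L[ℝ] ℂ).le_opNorm _).trans_lt ?_
    nlinarith [norm_nonneg (q z - φ (g z))]
  obtain ⟨l, hl, hlq⟩ := Complex.exists_continuousOn_eqOn_exp_comp (U := (univ : Set (ℝ × ℝ)))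
    (g := fun z => φ.symm (q (R z)))
    ((Homeomorph.Set.univ (ℝ × ℝ)).toHomotopyEquiv.simplyConnectedSpace) isOpen_univ
    (by fun_prop) (by rintro ⟨z, -, hz⟩; exact hqne (R z) hz)
  have hlc : Continuous l := continuousOn_univ.1 hl
  have hle : ∀ z : X, Complex.exp (l z) = φ.symm (q z) := fun z => by
    simpa [hR] using hlq (mem_univ (z : ℝ × ℝ))
  let v : X → ℂ := fun z => l z - Complex.log (φ.symm (q z) / g z)
  have hgne : ∀ z ∈ A ∪ B, g z ≠ 0 := fun z hz h => by
    have := hfn z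
    rw [← hgf z hz, h] at this
    simp at this
  have hslit : ∀ z ∈ A ∪ B, φ.symm (q z) / g z ∈ Complex.slitPlane := by
    intro z hz
    have h1 : ‖φ.symm (q z) / g z - 1‖ < 1 := by
      rw [div_sub_one (hgne z hz), norm_div, hgf z hz, hfn z, div_one, ← hgf z hz]
      linarith [hqd z]
    have := Complex.mem_slitPlane_of_norm_lt_one h1
    simpa using this
  have hvc : ContinuousOn v (A ∪ B) := by
    refine ContinuousOn.sub (by fun_prop) (ContinuousOn.clog ?_ hslit)
    exact ContinuousOn.div (by fun_prop) (by fun_prop) hgne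
  have hve : ∀ z ∈ A ∪ B, Complex.exp (v z) = g z := by
    intro z hz
    simp only [v]
    rw [Complex.exp_sub, hle, Complex.exp_log (div_ne_zero (hqne z) (hgne z hz))]
    field_simp [hqne z, hgne z hz]
  have hvB : v x = v y := hBc.eq_of_exp_eq_one (hvc.mono subset_union_right)
    (fun z hz => by rw [hve z (Or.inr hz), hgf z (Or.inr hz), hfB z hz]) hxAB.2 hyAB.2
  have hvA : v x - (u x : ℂ) * (2 * Real.pi * Complex.I) =
      v y - (u y : ℂ) * (2 * Real.pi * Complex.I) :=
    hAc.eq_of_exp_eq_one (v := fun z => v z - (u z : ℂ) * (2 * Real.pi * Complex.I))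
      ((hvc.mono subset_union_left).sub (by fun_prop))
      (fun z hz => by
        rw [Complex.exp_sub, hve z (Or.inl hz), hgf z (Or.inl hz), hfA z hz]
        exact div_self (Complex.exp_ne_zero _)) hxAB.1 hyAB.1
  rw [hvB, hu0 hxP, hu1 hyQ] at hvA
  simp only [Pi.zero_apply, Pi.one_apply, Complex.ofReal_zero, Complex.ofReal_one] at hvA
  exact Complex.two_pi_I_ne_zero (by linear_combination hvA)

end Unicoherence

section HereditarilyUnicoherent

/-- The intersection of all subcontinua containing two given points. -/
def continuumHull {X : Type*} [TopologicalSpace X] (x y : X) : Set X :=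
  ⋂₀ {K | IsClosed K ∧ IsPreconnected K ∧ x ∈ K ∧ y ∈ K}

/-- Any two closed connected sets have connected intersection. -/
def IsHereditarilyUnicoherent (X : Type*) [TopologicalSpace X] : Prop :=
  ∀ A B : Set X, IsClosed A → IsClosed B → IsPreconnected A → IsPreconnected B →
    IsPreconnected (A ∩ B)

section Basic

variable {X : Type*} [TopologicalSpace X] {a b x y : X}

theorem isClosed_continuumHull : IsClosed (continuumHull x y) :=
  isClosed_sInter fun _ hK => hK.1

theorem left_mem_continuumHull : x ∈ continuumHull x y := fun _ hK => hK.2.2.1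

theorem right_mem_continuumHull : y ∈ continuumHull x y := fun _ hK => hK.2.2.2

theorem continuumHull_subset {K : Set X} (hK : IsClosed K) (hKc : IsPreconnected K) (hx : x ∈ K)
    (hy : y ∈ K) : continuumHull x y ⊆ K :=
  sInter_subset_of_mem ⟨hK, hKc, hx, hy⟩

theorem continuumHull_comm : continuumHull x y = continuumHull y x := by
  simp only [continuumHull, and_comm (a := x ∈ _)]

theorem isPreconnected_continuumHull [CompactSpace X] [T2Space X] [PreconnectedSpace X]
    (hX : IsHereditarilyUnicoherent X) : IsPreconnected (continuumHull x y) := by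
  rw [isPreconnected_iff_subset_of_fully_disjoint_closed isClosed_continuumHull]
  intro P Q hP hQ hPQ hdisj
  obtain ⟨U, V, hU, hV, hPU, hQV, hUV⟩ := normal_separation hP hQ hdisj
  let F : Set (Set X) := {K | IsClosed K ∧ IsPreconnected K ∧ x ∈ K ∧ y ∈ K}
  have : Nonempty F := ⟨univ, isClosed_univ, isPreconnected_univ, mem_univ x, mem_univ y⟩
  obtain ⟨⟨K, hK⟩, hKUV⟩ : ∃ K : F, (K : Set X) ⊆ U ∪ V := by
    refine exists_subset_nhds_of_isCompact (V := fun K : F => (K : Set X)) ?_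
      (fun K => K.2.1.isCompact) fun z hz => (hU.union hV).mem_nhds ?_
    · rintro ⟨K, hK⟩ ⟨L, hL⟩
      exact ⟨⟨K ∩ L, hK.1.inter hL.1, hX K L hK.1 hL.1 hK.2.1 hL.2.1, ⟨hK.2.2.1, hL.2.2.1⟩,
        hK.2.2.2, hL.2.2.2⟩, inter_subset_left, inter_subset_right⟩
    · rw [← sInter_eq_iInter] at hz
      exact union_subset_union hPU hQV (hPQ hz)
  have hsub : continuumHull x y ⊆ K := sInter_subset_of_mem hK
  refine (isPreconnected_iff_subset_of_disjoint.1 hK.2.1 U V hU hV hKUV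
    (by rw [hUV.inter_eq, inter_empty])).imp (fun h z hz => ?_) fun h z hz => ?_
  · exact (hPQ hz).resolve_right fun hzQ => disjoint_left.1 hUV (h (hsub hz)) (hQV hzQ)
  · exact (hPQ hz).resolve_left fun hzP => disjoint_left.1 hUV (hPU hzP) (h (hsub hz))

theorem continuumHull_subset_union [CompactSpace X] [T2Space X] [PreconnectedSpace X]
    (hX : IsHereditarilyUnicoherent X) {S : Set X} (hS : IsClosed S) (hSc : IsPreconnected S)
    (hx : x ∈ S) (hy : y ∈ S) : continuumHull a y ⊆ continuumHull a x ∪ S :=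
  continuumHull_subset (isClosed_continuumHull.union hS)
    ((isPreconnected_continuumHull hX).union x right_mem_continuumHull hx hSc)
    (Or.inl left_mem_continuumHull) (Or.inr hy)

theorem continuumHull_subset_continuumHull [CompactSpace X] [T2Space X] [PreconnectedSpace X]
    (hX : IsHereditarilyUnicoherent X) (h : y ∈ continuumHull a x) :
    continuumHull a y ⊆ continuumHull a x :=
  continuumHull_subset isClosed_continuumHull (isPreconnected_continuumHull hX)
    left_mem_continuumHull h

theorem continuumHull_self [T1Space X] : continuumHull x x = {x} :=
  (continuumHull_subset isClosed_singleton isPreconnected_singleton rfl rfl).antisymm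
    (singleton_subset_iff.2 left_mem_continuumHull)

theorem eq_of_mem_continuumHull_of_mem_continuumHull [T2Space X] [PreconnectedSpace X]
    [LocallyPathConnectedSpace X] (hy : y ∈ continuumHull a x) (hx : x ∈ continuumHull a y) :
    x = y := by
  by_contra hxy
  have hay : a ≠ y := by
    rintro rfl
    rw [continuumHull_self] at hx
    exact hxy hx
  let C := pathComponentIn {y}ᶜ a
  have haC : a ∈ C := mem_pathComponentIn_self hay
  have hCo : IsOpen C := isOpen_compl_singleton.pathComponentIn a
  have hcl : closure C ⊆ insert y C := by
    intro z hz
    by_cases hzy : z = y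
    · exact Or.inl hzy
    · have hz' : z ∈ pathComponentIn {y}ᶜ z := mem_pathComponentIn_self hzy
      obtain ⟨t, htz, htC⟩ := mem_closure_iff.1 hz _ (isOpen_compl_singleton.pathComponentIn z) hz'
      refine Or.inr ?_
      change z ∈ pathComponentIn {y}ᶜ a
      rwa [← pathComponentIn_congr htC, pathComponentIn_congr htz]
  have hyC : y ∉ C := fun h => pathComponentIn_subset h rfl
  have hycl : y ∈ closure C := by
    by_contra hycl
    have hclosed : IsClosed C := closure_subset_iff_isClosed.1 fun z hz =>
      (hcl hz).resolve_left fun h => hycl (h ▸ hz)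
    exact hyC ((IsClopen.eq_univ ⟨hclosed, hCo⟩ ⟨a, haC⟩).ge (mem_univ y))
  by_cases hxC : x ∈ C
  · obtain ⟨γ, hγ⟩ : JoinedIn {y}ᶜ a x := hxC
    have hrange : y ∈ range γ := continuumHull_subset (isCompact_range γ.continuous).isClosed
      (isPreconnected_range γ.continuous) ⟨0, γ.source⟩ ⟨1, γ.target⟩ hy
    obtain ⟨t, ht⟩ := hrange
    exact hγ t ht
  · refine (hcl (continuumHull_subset isClosed_closure ?_ (subset_closure haC) hycl hx)).elim hxy hxC
    exact (isPathConnected_pathComponentIn hay).isConnected.isPreconnected.closure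

theorem mem_continuumHull_or_mem_continuumHull [CompactSpace X] [T2Space X] [PreconnectedSpace X]
    [LocallyPathConnectedSpace X] (hX : IsHereditarilyUnicoherent X) (hx : x ∈ continuumHull a b)
    (hy : y ∈ continuumHull a b) : x ∈ continuumHull a y ∨ y ∈ continuumHull a x := by
  by_contra! h
  have key : ∀ z, continuumHull a b ⊆ continuumHull a z ∪ continuumHull b z := fun z => by
    rw [continuumHull_comm (x := b)]
    exact continuumHull_subset_union hX isClosed_continuumHull (isPreconnected_continuumHull hX)
      left_mem_continuumHull right_mem_continuumHull
  have hxy := eq_of_mem_continuumHull_of_mem_continuumHull ((key x hy).resolve_left h.2)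
    ((key y hx).resolve_left h.1)
  exact h.1 (hxy ▸ right_mem_continuumHull)

theorem eventually_exists_isPreconnected_subset [T2Space X] [LocallyPathConnectedSpace X]
    {U : Set X} (hU : U ∈ 𝓝 x) :
    ∀ᶠ y in 𝓝 x, ∃ S ⊆ U, IsClosed S ∧ IsPreconnected S ∧ x ∈ S ∧ y ∈ S := by
  obtain ⟨V, ⟨hV, hVc⟩, hVU⟩ := (path_connected_basis x).mem_iff.1 hU
  filter_upwards [hV] with y hy
  obtain ⟨γ, hγ⟩ := hVc.joinedIn x (mem_of_mem_nhds hV) y hy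
  refine ⟨range γ, ?_, (isCompact_range γ.continuous).isClosed,
    isPreconnected_range γ.continuous, ⟨0, γ.source⟩, ⟨1, γ.target⟩⟩
  rintro _ ⟨t, rfl⟩
  exact hVU (hγ t)

end Basic

/-- A strictly monotone function on the nonempty closed subsets of a compact metric space which is
Lipschitz with respect to the Hausdorff distance. -/
theorem exists_strictMono_closeds {X : Type*} [MetricSpace X] [CompactSpace X] [Nonempty X] :
    ∃ w : Set X → ℝ,
      (∀ K L : Set X, K.Nonempty → IsClosed K → K ⊂ L → w K < w L) ∧
      ∀ (K L : Set X) (ε : ℝ), K.Nonempty → L.Nonempty → (∀ z ∈ L, ∃ t ∈ K, dist z t ≤ ε) →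
        w L ≤ w K + ε * 2 := by
  let d := TopologicalSpace.denseSeq X
  let c : Set X → ℕ → ℝ := fun K n => (1 / 2 : ℝ) ^ n * infDist (d n) K
  have hgeom : HasSum (fun n : ℕ => (1 / 2 : ℝ) ^ n) 2 := hasSum_geometric_two
  have hcs : ∀ K : Set X, K.Nonempty → Summable (c K) := by
    intro K hK
    refine (hgeom.summable.mul_right (diam (univ : Set X))).of_nonneg_of_le
      (fun n => mul_nonneg (by positivity) infDist_nonneg) fun n => ?_
    obtain ⟨z, hz⟩ := hK
    have : infDist (d n) K ≤ diam (univ : Set X) := (infDist_le_dist_of_mem hz).trans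
      (dist_le_diam_of_mem isCompact_univ.isBounded (mem_univ _) (mem_univ _))
    simp only [c]
    gcongr
  refine ⟨fun K => -∑' n, c K n, fun K L hK hKc hKL => ?_, fun K L ε hK hL h => ?_⟩
  · obtain ⟨z, hzL, hzK⟩ := exists_of_ssubset hKL
    have hr : 0 < infDist z K := (hKc.notMem_iff_infDist_pos hK).1 hzK
    obtain ⟨n, hn⟩ := (TopologicalSpace.denseRange_denseSeq X).exists_mem_open isOpen_ball
      ⟨z, mem_ball_self (half_pos hr)⟩
    rw [mem_ball] at hn
    refine neg_lt_neg ((hcs L (hK.mono hKL.1)).tsum_lt_tsum (i := n) (fun m => ?_) ?_ (hcs K hK))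
    · exact mul_le_mul_of_nonneg_left (infDist_le_infDist_of_subset hKL.1 hK) (by positivity)
    · refine mul_lt_mul_of_pos_left ?_ (by positivity)
      have h1 : infDist (d n) L ≤ dist (d n) z := infDist_le_dist_of_mem hzL
      have h2 : infDist z K ≤ infDist (d n) K + dist z (d n) := infDist_le_infDist_add_dist
      rw [dist_comm] at h2
      linarith
  · have hle : ∀ n, infDist (d n) K ≤ infDist (d n) L + ε := by
      intro n
      rw [← sub_le_iff_le_add]
      refine (le_infDist hL).2 fun z hz => ?_
      obtain ⟨t, ht, hzt⟩ := h z hz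
      linarith [infDist_le_dist_of_mem (x := d n) ht, dist_triangle (d n) z t]
    have := hasSum_le (fun n => ?_) (hcs K hK).hasSum
      ((hcs L hL).hasSum.add (hgeom.mul_left ε))
    · linarith
    · simp only [c]
      rw [mul_comm ε, ← mul_add]
      exact mul_le_mul_of_nonneg_left (hle n) (by positivity)

/-- In a hereditarily unicoherent Peano continuum, an irreducible subcontinuum between two points is
an arc, and there is a monotone retraction onto it. -/
theorem exists_locally_constant_off_continuumHull {X : Type*} [MetricSpace X] [CompactSpace X]
    [PreconnectedSpace X] [LocallyPathConnectedSpace X] (hX : IsHereditarilyUnicoherent X)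
    {a b : X} (hab : a ≠ b) :
    ∃ ρ : X → ℝ, Continuous ρ ∧ (∀ x, ρ x ∈ Icc (0 : ℝ) 1) ∧
      BijOn ρ (continuumHull a b) (Icc 0 1) ∧
      ∀ x ∉ continuumHull a b, ∀ᶠ y in 𝓝 x, ρ y = ρ x := by
  have : Nonempty X := ⟨a⟩
  obtain ⟨w, hwlt, hwle⟩ := exists_strictMono_closeds (X := X)
  set A := continuumHull a b with hAdef
  have hAcl : IsClosed A := isClosed_continuumHull
  have hAc : IsPreconnected A := isPreconnected_continuumHull hX
  let K : X → Set X := fun x => continuumHull a x ∩ A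
  have hKcl : ∀ x, IsClosed (K x) := fun x => isClosed_continuumHull.inter hAcl
  have hKc : ∀ x, IsPreconnected (K x) := fun x =>
    hX _ _ isClosed_continuumHull hAcl (isPreconnected_continuumHull hX) hAc
  have haK : ∀ x, a ∈ K x := fun x => ⟨left_mem_continuumHull, left_mem_continuumHull⟩
  have hwmono : ∀ {x y}, K x ⊆ K y → w (K x) ≤ w (K y) := by
    intro x y hxy
    have := hwle (K y) (K x) 0 ⟨a, haK y⟩ ⟨a, haK x⟩ fun z hz => ⟨z, hxy hz, by simp⟩
    simpa using this
  have hKsub : ∀ {S : Set X} {x y : X}, IsClosed S → IsPreconnected S → x ∈ S → y ∈ S →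
      K y ⊆ K x ∪ S ∩ A := by
    rintro S x y hS hSc hx hy z ⟨hz, hzA⟩
    exact (continuumHull_subset_union hX hS hSc hx hy hz).imp (fun h => ⟨h, hzA⟩) fun h => ⟨h, hzA⟩
  have hclose : ∀ {S : Set X} {x y : X} {ε : ℝ}, IsClosed S → IsPreconnected S → x ∈ S → y ∈ S →
      (∀ z ∈ S, ∀ t ∈ S, dist z t ≤ ε) → w (K y) ≤ w (K x) + ε * 2 := by
    intro S x y ε hS hSc hx hy hε
    refine hwle _ _ _ ⟨a, haK x⟩ ⟨a, haK y⟩ fun z hz => ?_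
    by_cases hzx : z ∈ K x
    · exact ⟨z, hzx, by simpa using hε x hx x hx⟩
    have hzS : z ∈ S ∩ A := (hKsub hS hSc hx hy hz).resolve_left hzx
    obtain ⟨t, -, htx, htS⟩ := isPreconnected_closed_iff.1 (hKc y) _ _ (hKcl x) (hS.inter hAcl)
      (hKsub hS hSc hx hy) ⟨a, haK y, haK x⟩ ⟨z, hz, hzS⟩
    exact ⟨t, htx, hε z hzS.1 t htS.1⟩
  have hKa : K a = {a} := by
    refine Subset.antisymm ?_ (singleton_subset_iff.2 (haK a))
    exact inter_subset_left.trans continuumHull_self.subset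
  have hKb : K b = A := inter_self A
  have hlt : w (K a) < w (K b) := by
    rw [hKa, hKb]
    refine hwlt _ _ (singleton_nonempty a) isClosed_singleton ⟨?_, fun h => ?_⟩
    · exact singleton_subset_iff.2 left_mem_continuumHull
    · exact hab (h right_mem_continuumHull).symm
  have hpos := sub_pos.2 hlt
  have hmem : ∀ x, (w (K x) - w (K a)) / (w (K b) - w (K a)) ∈ Icc (0 : ℝ) 1 := by
    intro x
    have h1 : w (K a) ≤ w (K x) := hwmono (hKa ▸ singleton_subset_iff.2 (haK x))
    have h2 : w (K x) ≤ w (K b) := hwmono (hKb ▸ inter_subset_right)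
    exact ⟨div_nonneg (sub_nonneg.2 h1) hpos.le, (div_le_one hpos).2 (by linarith)⟩
  have hcont : Continuous fun x => w (K x) := by
    refine Metric.continuous_iff'.2 fun x ε hε => ?_
    filter_upwards [eventually_exists_isPreconnected_subset
      (closedBall_mem_nhds x (show 0 < ε / 8 by positivity))] with y hy
    obtain ⟨S, hSU, hS, hSc, hxS, hyS⟩ := hy
    have hd : ∀ z ∈ S, ∀ t ∈ S, dist z t ≤ ε / 4 := fun z hz t ht => by
      have h1 := mem_closedBall.1 (hSU hz)
      have h2 := mem_closedBall.1 (hSU ht)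
      linarith [dist_triangle_right z t x]
    have h1 := hclose hS hSc hxS hyS hd
    have h2 := hclose hS hSc hyS hxS hd
    rw [Real.dist_eq, abs_lt]
    constructor <;> linarith
  have hρ : Continuous fun x => (w (K x) - w (K a)) / (w (K b) - w (K a)) :=
    (hcont.sub continuous_const).div_const _
  refine ⟨_, hρ, hmem, ⟨fun x _ => hmem x, ?_, ?_⟩, fun x hx => ?_⟩
  · have key : ∀ x ∈ A, ∀ y ∈ A, x ∈ continuumHull a y → w (K x) = w (K y) → x = y := by
      intro x hx y hy hxy hw
      have hsub : K x ⊆ K y :=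
        inter_subset_inter_left _ (continuumHull_subset_continuumHull hX hxy)
      have hyx : y ∈ K x := by
        by_contra h
        exact (hwlt _ _ ⟨a, haK x⟩ (hKcl x)
          ⟨hsub, fun h' => h (h' ⟨right_mem_continuumHull, hy⟩)⟩).ne hw
      exact eq_of_mem_continuumHull_of_mem_continuumHull hyx.1 hxy
    intro x hx y hy hxy
    have hw : w (K x) = w (K y) := sub_left_injective ((div_left_inj' hpos.ne').1 hxy)
    rcases mem_continuumHull_or_mem_continuumHull hX hx hy with h | h
    · exact key x hx y hy h hw
    · exact (key y hy x hx h hw.symm).symm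
  · have := hAc.intermediate_value (show a ∈ A from left_mem_continuumHull)
      (show b ∈ A from right_mem_continuumHull) hρ.continuousOn
    rwa [sub_self, zero_div, div_self hpos.ne'] at this
  · filter_upwards [eventually_exists_isPreconnected_subset (hAcl.isOpen_compl.mem_nhds hx)]
      with y ⟨S, hSA, hS, hSc, hxS, hyS⟩
    have hempty : S ∩ A = ∅ := (disjoint_left.2 fun z hz => hSA hz).inter_eq
    have h1 : K y ⊆ K x := by simpa [hempty] using hKsub hS hSc hxS hyS
    have h2 : K x ⊆ K y := by simpa [hempty] using hKsub hS hSc hyS hxS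
    rw [h1.antisymm h2]

end HereditarilyUnicoherent

/-- Every planar absolute retract (a nonempty compact subset of the plane homeomorphic
to a retract of the Hilbert cube) is a topological fractal. -/
theorem planar_absolute_retract_is_topological_fractal
    (X : Set (ℝ × ℝ)) (hne : X.Nonempty) (hcomp : IsCompact X)
    (hAR : ∃ r : (ℕ → Set.Icc (0 : ℝ) 1) → (ℕ → Set.Icc (0 : ℝ) 1),
      Continuous r ∧ r ∘ r = r ∧ Nonempty (X ≃ₜ Set.range r)) :
    ∃ F : Set (X → X), F.Finite ∧ (∀ f ∈ F, Continuous f) ∧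
      TopContractive F ∧ (⋃ f ∈ F, Set.range f) = Set.univ := by
  obtain ⟨r, hr, hrr, ⟨e⟩⟩ := hAR
  have := isCompact_iff_compactSpace.1 hcomp
  have := hne.to_subtype
  have := tietzeExtension_of_homeomorph_range hr hrr e
  obtain ⟨R, hR⟩ := exists_retraction_of_isClosed hcomp.isClosed
  obtain ⟨h, hh, hs⟩ := exists_continuous_image_Icc_eq_univ (Y := X)
  rcases (interior X).eq_empty_or_nonempty with hXint | hXint
  · have := pathConnectedSpace_of_retraction R hR
    have := (isQuotientMap_of_retraction R hR).locallyPathConnectedSpace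
    rcases subsingleton_or_nontrivial X with hsub | hnt
    · refine ⟨{id}, finite_singleton _, ?_, fun ε hε => ⟨0, fun l _ _ => ?_⟩, by simp⟩
      · rintro _ rfl
        exact continuous_id
      · rwa [diam_subsingleton subsingleton_of_subsingleton]
    · obtain ⟨a, b, hab⟩ := exists_pair_ne X
      obtain ⟨ρ, hρ, hmem, hA, hloc⟩ := exists_locally_constant_off_continuumHull
        (fun A B hA hB => isPreconnected_inter_of_retraction hcomp hXint R hR hA hB) hab
      exact isTopologicalFractal_of_locally_constant_off hh hs hρ hmem hA hloc
  · exact isTopologicalFractal_of_interior_nonempty hh hs hXint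
end
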